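/- arXiv:2106.01058 — 2 statements merged into one kernel-verified Lean document; each statement's English description precedes it below -/
import Mathlib

section
/- Let d, k, L ∈ ℕ, let q₁,…,q_k : ℤ^L → ℤ^d be polynomial maps, and let (X, ℬ, μ, (T_g)_{g∈ℤ^d}) be a ℤ^d-measure-preserving system. If the tuple (T_{q₁(n)},…,T_{q_k(n)})_{n∈ℤ^L} is jointly ergodic for μ, then for all 1 ≤ i, j ≤ k with i ≠ j the sequence (T_{q_i(n) − q_j(n)})_{n∈ℤ^L} is ergodic for μ. -/
open MeasureTheory Filter Finset
open scoped ENNReal symmDiff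

noncomputable section

/-- A Følner sequence in `ℤ^L`: a sequence of nonempty finite subsets that is
asymptotically invariant under all translations. -/
def IsFolner (L : ℕ) (I : ℕ → Finset (Fin L → ℤ)) : Prop :=
  (∀ N, (I N).Nonempty) ∧
    ∀ g : Fin L → ℤ,
      Tendsto (fun N => ((((I N).image (g + ·)) ∆ I N).card : ℝ) / ((I N).card : ℝ))
        atTop (nhds 0)

/-- The map `q : ℤ^L → ℤ^d` is represented by the family `Q` of polynomials with
rational coefficients. -/
def RepresentedBy {L d : ℕ} (q : (Fin L → ℤ) → Fin d → ℤ)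
    (Q : Fin d → MvPolynomial (Fin L) ℚ) : Prop :=
  ∀ n t, ((q n t : ℤ) : ℚ) = MvPolynomial.eval (fun l => ((n l : ℤ) : ℚ)) (Q t)

/-- `q : ℤ^L → ℤ^d` is a polynomial map. -/
def IsPolyMap {L d : ℕ} (q : (Fin L → ℤ) → Fin d → ℤ) : Prop :=
  ∃ Q, RepresentedBy q Q

/-- The scalar map `q : ℤ^L → ℤ` is represented by the polynomial `Q` with rational
coefficients. -/
def RepresentedBy₁ {L : ℕ} (q : (Fin L → ℤ) → ℤ) (Q : MvPolynomial (Fin L) ℚ) : Prop :=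
  ∀ n, ((q n : ℤ) : ℚ) = MvPolynomial.eval (fun l => ((n l : ℤ) : ℚ)) Q

/-- The sequence `(T_{q(n)})_{n ∈ ℤ^L}` is ergodic for `μ`: Følner averages of
`f ∘ T_{q(n)}` converge in `L²(μ)` to `∫ f dμ`, for every bounded measurable `f`. -/
def ErgodicSeq {X : Type*} [MeasurableSpace X] (μ : Measure X) {d L : ℕ}
    (T : (Fin d → ℤ) → X → X) (q : (Fin L → ℤ) → Fin d → ℤ) : Prop :=
  ∀ f : X → ℂ, Measurable f → (∃ C, ∀ x, ‖f x‖ ≤ C) →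
    ∀ I : ℕ → Finset (Fin L → ℤ), IsFolner L I →
      Tendsto (fun N =>
          eLpNorm (fun x => (((I N).card : ℂ))⁻¹ * (∑ n ∈ I N, f (T (q n) x)) - ∫ y, f y ∂μ)
            2 μ)
        atTop (nhds 0)

/-- The tuple `(T_{q_1(n)}, …, T_{q_k(n)})_{n ∈ ℤ^L}` is jointly ergodic for `μ`. -/
def JointlyErgodic {X : Type*} [MeasurableSpace X] (μ : Measure X) {d L k : ℕ}
    (T : (Fin d → ℤ) → X → X) (q : Fin k → (Fin L → ℤ) → Fin d → ℤ) : Prop :=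
  ∀ f : Fin k → X → ℂ, (∀ i, Measurable (f i)) → (∀ i, ∃ C, ∀ x, ‖f i x‖ ≤ C) →
    ∀ I : ℕ → Finset (Fin L → ℤ), IsFolner L I →
      Tendsto (fun N =>
          eLpNorm (fun x => (((I N).card : ℂ))⁻¹ * (∑ n ∈ I N, ∏ i, f i (T (q i n) x)) -
              ∏ i, ∫ y, f i y ∂μ)
            2 μ)
        atTop (nhds 0)

/-- The sequence `(T_{q_1(n)} × ⋯ × T_{q_k(n)})_{n ∈ ℤ^L}` is ergodic for the product
measure `μ^{⊗k}` on `X^k`. -/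
def ProdErgodic {X : Type*} [MeasurableSpace X] (μ : Measure X) {d L k : ℕ}
    (T : (Fin d → ℤ) → X → X) (q : Fin k → (Fin L → ℤ) → Fin d → ℤ) : Prop :=
  ∀ F : (Fin k → X) → ℂ, Measurable F → (∃ C, ∀ x, ‖F x‖ ≤ C) →
    ∀ I : ℕ → Finset (Fin L → ℤ), IsFolner L I →
      Tendsto (fun N =>
          eLpNorm (fun x : Fin k → X =>
              (((I N).card : ℂ))⁻¹ * (∑ n ∈ I N, F (fun i => T (q i n) (x i))) -
                ∫ y, F y ∂(Measure.pi fun _ : Fin k => μ))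
            2 (Measure.pi fun _ : Fin k => μ))
        atTop (nhds 0)

/-!
Testing joint ergodicity with `f` in slot `i`, `g` in slot `j` and `1` elsewhere, and moving
`T_{q_j(n)}` away by invariance of `μ`, shows that the averages of `f ∘ T_{q_i(n) - q_j(n)}`
converge weakly to `∫ f dμ`. It remains to see that they converge in `L²(μ)` at all. By the
spectral theorem for the commuting Koopman operators this holds for the averages along any map
`p : ℤ^L → ℤ^d` as soon as the scalar averages of `χ(p(n))` converge for every character `χ` of
`ℤ^d`. For polynomial `p` this is Weyl equidistribution: either `χ ∘ p` has a finite-index group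
of periods, or its averages tend to `0`, by van der Corput's inequality and induction on the
degree.
-/

section Averages

variable {V E : Type*}

/-- The average of `f` over the finite set `s`. -/
def avg [AddCommGroup E] [Module ℝ E] (s : Finset V) (f : V → E) : E :=
  (#s : ℝ)⁻¹ • ∑ n ∈ s, f n

theorem avg_const [AddCommGroup E] [Module ℝ E] {s : Finset V} (hs : s.Nonempty) (c : E) :
    avg s (fun _ => c) = c := by
  have hcard : (#s : ℝ) ≠ 0 := by exact_mod_cast hs.card_ne_zero
  rw [avg, sum_const, ← Nat.cast_smul_eq_nsmul ℝ, inv_smul_smul₀ hcard]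

theorem avg_eq_inv_mul_sum (s : Finset V) (f : V → ℂ) : avg s f = (#s : ℂ)⁻¹ * ∑ n ∈ s, f n := by
  simp [avg]

theorem avg_sum [AddCommGroup E] [Module ℝ E] {ι : Type*} (s : Finset V) (t : Finset ι)
    (f : ι → V → E) : avg s (fun n => ∑ j ∈ t, f j n) = ∑ j ∈ t, avg s (f j) := by
  simp only [avg]
  rw [sum_comm, smul_sum]

theorem map_avg [AddCommGroup E] [Module ℝ E] {F Φ : Type*} [AddCommGroup F] [Module ℝ F]
    [FunLike Φ E F] [AddMonoidHomClass Φ E F] (φ : Φ) (s : Finset V) (f : V → E) :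
    φ (avg s f) = avg s fun n => φ (f n) := by
  rw [avg, map_inv_natCast_smul φ ℝ ℝ, map_sum, avg]

theorem norm_avg_le [SeminormedAddCommGroup E] [NormedSpace ℝ E] {s : Finset V} {f : V → E}
    {C : ℝ} (hC : 0 ≤ C) (hf : ∀ n, ‖f n‖ ≤ C) : ‖avg s f‖ ≤ C := by
  rw [avg, norm_smul, norm_inv, Real.norm_natCast]
  refine inv_mul_le_of_le_mul₀ (Nat.cast_nonneg _) hC ?_
  simpa using norm_sum_le_of_le s fun n _ => hf n

theorem norm_avg_sq_le [SeminormedAddCommGroup E] [NormedSpace ℝ E] (s : Finset V) (f : V → E) :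
    ‖avg s f‖ ^ 2 ≤ avg s fun n => ‖f n‖ ^ 2 := by
  have hsum : ‖∑ n ∈ s, f n‖ ^ 2 ≤ #s * ∑ n ∈ s, ‖f n‖ ^ 2 :=
    (pow_le_pow_left₀ (norm_nonneg _) (norm_sum_le _ _) 2).trans sq_sum_le_card_mul_sum_sq
  calc ‖avg s f‖ ^ 2 = (#s : ℝ)⁻¹ ^ 2 * ‖∑ n ∈ s, f n‖ ^ 2 := by
        rw [avg, norm_smul, norm_inv, Real.norm_natCast, mul_pow]
    _ ≤ (#s : ℝ)⁻¹ ^ 2 * (#s * ∑ n ∈ s, ‖f n‖ ^ 2) := by gcongr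
    _ = avg s fun n => ‖f n‖ ^ 2 := by
        rw [avg, smul_eq_mul]
        rcases s.eq_empty_or_nonempty with rfl | hs
        · simp
        have hcard : (#s : ℝ) ≠ 0 := by exact_mod_cast hs.card_ne_zero
        field_simp

theorem eventually_norm_avg_sum_sq_le [NormedAddCommGroup E] [InnerProductSpace ℝ E] {ι : Type*}
    (t : Finset ι) {f : ι → V → E} {C : ℝ} (hf : ∀ i n, ‖f i n‖ ≤ C) {I : ℕ → Finset V}
    (hcorr : Pairwise fun i j =>
      Tendsto (fun N => avg (I N) fun n => inner ℝ (f i n) (f j n)) atTop (nhds 0)) :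
    ∀ᶠ N in atTop, ‖avg (I N) fun n => ∑ i ∈ t, f i n‖ ^ 2 ≤ #t * C ^ 2 + 1 := by
  classical
  have hlim : Tendsto (fun N => ∑ i ∈ t, ∑ j ∈ t.erase i,
      avg (I N) fun n => inner ℝ (f i n) (f j n)) atTop (nhds 0) := by
    simpa using tendsto_finsetSum t fun i _ => tendsto_finsetSum (t.erase i) fun j hj =>
      hcorr (ne_of_mem_erase hj).symm
  have hdiag (N : ℕ) (i : ι) : avg (I N) (fun n => inner ℝ (f i n) (f i n)) ≤ C ^ 2 := by
    refine (Real.le_norm_self _).trans (norm_avg_le (sq_nonneg C) fun n => ?_)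
    rw [real_inner_self_eq_norm_sq, Real.norm_of_nonneg (sq_nonneg _)]
    exact pow_le_pow_left₀ (norm_nonneg _) (hf i n) 2
  filter_upwards [hlim.eventually_le_const zero_lt_one] with N hN
  calc ‖avg (I N) fun n => ∑ i ∈ t, f i n‖ ^ 2
      ≤ avg (I N) fun n => ‖∑ i ∈ t, f i n‖ ^ 2 := norm_avg_sq_le _ _
    _ = ∑ i ∈ t, ∑ j ∈ t, avg (I N) fun n => inner ℝ (f i n) (f j n) := by
        simp only [← real_inner_self_eq_norm_sq, sum_inner, inner_sum, avg_sum]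
        exact sum_comm
    _ = ∑ i ∈ t, avg (I N) (fun n => inner ℝ (f i n) (f i n)) +
          ∑ i ∈ t, ∑ j ∈ t.erase i, avg (I N) fun n => inner ℝ (f i n) (f j n) := by
        rw [← sum_add_distrib]
        exact sum_congr rfl fun i hi => (add_sum_erase t _ hi).symm
    _ ≤ #t * C ^ 2 + 1 := by
        refine add_le_add ?_ hN
        simpa using sum_le_card_nsmul t _ _ fun i _ => hdiag N i

end Averages

section Folner

namespace IsFolner

variable {L : ℕ} {I : ℕ → Finset (Fin L → ℤ)} {E : Type*}

theorem tendsto_avg_shift_sub [SeminormedAddCommGroup E] [NormedSpace ℝ E] (hI : IsFolner L I)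
    {f : (Fin L → ℤ) → E} {C : ℝ} (hf : ∀ n, ‖f n‖ ≤ C) (h : Fin L → ℤ) :
    Tendsto (fun N => avg (I N) (fun n => f (n + h)) - avg (I N) f) atTop (nhds 0) := by
  have hlim := (hI.2 h).mul_const C
  rw [zero_mul] at hlim
  refine squeeze_zero_norm (fun N => ?_) hlim
  set A := (I N).image (h + ·) with hA
  have hbound (s : Finset (Fin L → ℤ)) : ‖∑ n ∈ s, f n‖ ≤ #s * C := by
    simpa using norm_sum_le_of_le s fun n _ => hf n
  have hshift : ∑ n ∈ I N, f (n + h) = ∑ n ∈ A, f n := by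
    simp only [hA, sum_image (add_right_injective h).injOn, add_comm]
  have hcard : #(A ∆ I N) = #(A \ I N) + #(I N \ A) :=
    card_union_of_disjoint disjoint_sdiff_sdiff
  calc ‖avg (I N) (fun n => f (n + h)) - avg (I N) f‖
      = (#(I N) : ℝ)⁻¹ * ‖∑ n ∈ A \ I N, f n - ∑ n ∈ I N \ A, f n‖ := by
        rw [avg, avg, ← smul_sub, hshift, ← sum_sdiff_sub_sum_sdiff, norm_smul, norm_inv,
          Real.norm_natCast]
    _ ≤ (#(I N) : ℝ)⁻¹ * (#(A \ I N) * C + #(I N \ A) * C) := by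
        gcongr
        exact (norm_sub_le _ _).trans (add_le_add (hbound _) (hbound _))
    _ = #(A ∆ I N) / #(I N) * C := by
        rw [hcard]; push_cast; ring

theorem tendsto_avg_sum_shift_sub [SeminormedAddCommGroup E] [NormedSpace ℝ E]
    (hI : IsFolner L I) {f : (Fin L → ℤ) → E} {C : ℝ} (hf : ∀ n, ‖f n‖ ≤ C) {ι : Type*}
    (t : Finset ι) (h : ι → Fin L → ℤ) :
    Tendsto (fun N => avg (I N) (fun n => ∑ j ∈ t, f (n + h j)) - #t • avg (I N) f)
      atTop (nhds 0) := by
  simpa [avg_sum] using tendsto_finsetSum t fun j _ => hI.tendsto_avg_shift_sub hf (h j)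

theorem tendsto_avg_zero_of_correlation [NormedAddCommGroup E] [InnerProductSpace ℝ E]
    (hI : IsFolner L I) {f : (Fin L → ℤ) → E} {C : ℝ} (hf : ∀ n, ‖f n‖ ≤ C)
    {h : ℕ → Fin L → ℤ} (hcorr : Pairwise fun i j => Tendsto
      (fun N => avg (I N) fun n => inner ℝ (f (n + h i)) (f (n + h j))) atTop (nhds 0)) :
    Tendsto (fun N => avg (I N) f) atTop (nhds 0) := by
  rw [NormedAddGroup.tendsto_nhds_zero]
  intro ε hε
  obtain ⟨J, hJ⟩ := exists_nat_gt (max 1 (4 * (C ^ 2 + 1) / ε ^ 2))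
  obtain ⟨hJ1, hJε⟩ := max_lt_iff.mp hJ
  rw [div_lt_iff₀ (by positivity)] at hJε
  have hshift := NormedAddGroup.tendsto_nhds_zero.mp
    (hI.tendsto_avg_sum_shift_sub hf (range J) h) (J * ε / 2) (by positivity)
  have hsq := eventually_norm_avg_sum_sq_le (range J) (fun i n => hf (n + h i)) hcorr
  filter_upwards [hshift, hsq] with N hN hN2
  set S := avg (I N) fun n => ∑ j ∈ range J, f (n + h j)
  rw [card_range] at hN hN2
  have hS : ‖S‖ < J * ε / 2 := by
    refine lt_of_pow_lt_pow_left₀ 2 (by positivity) (hN2.trans_lt ?_)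
    nlinarith
  have hJavg : J * ‖avg (I N) f‖ < J * ε :=
    calc J * ‖avg (I N) f‖ = ‖S - (S - J • avg (I N) f)‖ := by
          rw [sub_sub_cancel, ← Nat.cast_smul_eq_nsmul ℝ, norm_smul, Real.norm_natCast]
      _ ≤ ‖S‖ + ‖S - J • avg (I N) f‖ := norm_sub_le _ _
      _ < J * ε := by linarith
  exact lt_of_mul_lt_mul_left hJavg (Nat.cast_nonneg J)

theorem tendsto_avg_zero_of_eigenfunction (hI : IsFolner L I) {f : (Fin L → ℤ) → ℂ} {C : ℝ}
    (hf : ∀ n, ‖f n‖ ≤ C) {h : Fin L → ℤ} {z : ℂ} (hz : z ≠ 1) (hfz : ∀ n, f (n + h) = z * f n) :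
    Tendsto (fun N => avg (I N) f) atTop (nhds 0) := by
  have hlim := (hI.tendsto_avg_shift_sub hf h).const_mul (z - 1)⁻¹
  rw [mul_zero] at hlim
  refine hlim.congr fun N => ?_
  have hmul : avg (I N) (fun n => z * f n) = z * avg (I N) f :=
    (map_avg (AddMonoidHom.mulLeft z) (I N) f).symm
  simp only [hfz, hmul]
  field_simp [sub_ne_zero.mpr hz]

end IsFolner

end Folner

section Periods

variable {V C : Type*} [AddCommGroup V]

/-- The group of periods of a function on an abelian group. -/
def periods (u : V → C) : AddSubgroup V where
  carrier := {h | Function.Periodic u h}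
  zero_mem' n := by rw [add_zero]
  add_mem' := Function.Periodic.add_period
  neg_mem' := Function.Periodic.neg

theorem mem_periods {u : V → C} {h : V} : h ∈ periods u ↔ ∀ n, u (n + h) = u n := Iff.rfl

theorem apply_eq_of_mk_eq {u : V → C} {n m : V}
    (h : (n : V ⧸ periods u) = m) : u n = u m := by
  have := mem_periods.mp (QuotientAddGroup.eq.mp h) n
  rwa [add_neg_cancel_left, eq_comm] at this

theorem finite_range_of_finiteIndex_periods {u : V → C} [(periods u).FiniteIndex] :
    (Set.range u).Finite := by
  refine (Set.finite_range fun x : V ⧸ periods u => u x.out).subset ?_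
  rintro _ ⟨n, rfl⟩
  exact ⟨n, apply_eq_of_mk_eq (QuotientAddGroup.out_eq' _)⟩

theorem sum_add_out_eq [AddCommMonoid C] (u : V → C) [Fintype (V ⧸ periods u)] (n : V) :
    ∑ x : V ⧸ periods u, u (n + x.out) = ∑ x : V ⧸ periods u, u x.out := by
  rw [← Equiv.sum_comp (Equiv.addLeft (n : V ⧸ periods u)) fun x => u x.out]
  refine sum_congr rfl fun x _ => apply_eq_of_mk_eq ?_
  rw [QuotientAddGroup.mk_add, QuotientAddGroup.out_eq', QuotientAddGroup.out_eq',
    Equiv.coe_addLeft]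

theorem IsFolner.exists_tendsto_avg {L : ℕ} {I : ℕ → Finset (Fin L → ℤ)} (hI : IsFolner L I)
    {E : Type*} [SeminormedAddCommGroup E] [NormedSpace ℝ E] {f : (Fin L → ℤ) → E}
    [(periods f).FiniteIndex] : ∃ c, Tendsto (fun N => avg (I N) f) atTop (nhds c) := by
  have := Fintype.ofFinite ((Fin L → ℤ) ⧸ periods f)
  obtain ⟨C, hC⟩ := (finite_range_of_finiteIndex_periods (u := f)).isBounded.exists_norm_le
  have hlim := hI.tendsto_avg_sum_shift_sub (fun n => hC _ (Set.mem_range_self n)) univ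
    fun x : (Fin L → ℤ) ⧸ periods f => x.out
  simp only [sum_add_out_eq, avg_const (hI.1 _), card_univ] at hlim
  set S := ∑ x : (Fin L → ℤ) ⧸ periods f, f x.out
  set K := Fintype.card ((Fin L → ℤ) ⧸ periods f)
  have hK : (K : ℝ) ≠ 0 := by exact_mod_cast Fintype.card_ne_zero
  refine ⟨(K : ℝ)⁻¹ • S, ?_⟩
  have hlim' := (hlim.const_sub S).const_smul (K : ℝ)⁻¹
  rw [sub_zero] at hlim'
  refine hlim'.congr fun N => ?_
  rw [sub_sub_cancel, ← Nat.cast_smul_eq_nsmul ℝ, inv_smul_smul₀ hK]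

end Periods

section Differences

open scoped fwdDiff

variable {V C : Type*} [AddCommGroup V] [AddCommGroup C]

theorem fwdDiff_comp_add_right (h a : V) (u : V → C) :
    Δ_[h] (fun n => u (n + a)) = fun n => Δ_[h] u (n + a) := by
  funext n
  simp only [fwdDiff, add_right_comm]

theorem fwdDiff_map_comp {C' F : Type*} [AddCommGroup C'] [FunLike F C C']
    [AddMonoidHomClass F C C'] (φ : F) (h : V) (u : V → C) :
    Δ_[h] (fun n => φ (u n)) = fun n => φ (Δ_[h] u n) := by
  funext n
  simp only [fwdDiff, map_sub]

theorem fwdDiff_mul {R : Type*} [CommRing R] (h : V) (u v : V → R) :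
    Δ_[h] (fun n => u n * v n) = fun n => u (n + h) * Δ_[h] v n + Δ_[h] u n * v n := by
  funext n
  simp only [fwdDiff]
  ring

theorem sum_fwdDiff_add_nsmul (u : V → C) (h n : V) (m : ℕ) :
    ∑ j ∈ range m, Δ_[h] u (n + j • h) = u (n + m • h) - u n := by
  simpa [fwdDiff, succ_nsmul, add_assoc] using sum_range_sub (fun j : ℕ => u (n + j • h)) m

theorem mem_periods_fwdDiff_comm {u : V → C} {a b : V} :
    a ∈ periods (Δ_[b] u) ↔ b ∈ periods (Δ_[a] u) := by
  simp only [mem_periods, fwdDiff]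
  refine forall_congr' fun n => ?_
  rw [add_right_comm n b a, sub_eq_sub_iff_sub_eq_sub]

theorem periods_fwdDiff_le_nsmul (u : V → C) (a : V) (m : ℕ) :
    periods (Δ_[a] u) ≤ periods (Δ_[m • a] u) := fun _ h =>
  mem_periods_fwdDiff_comm.mpr (nsmul_mem (mem_periods_fwdDiff_comm.mp h) m)

/-- `DegreeLT D u` says that the map `u` between abelian groups is polynomial of degree less
than `D`, in the sense that it is annihilated by any `D` successive differences. -/
def DegreeLT : ℕ → (V → C) → Prop
  | 0, u => u = 0
  | D + 1, u => ∀ h, DegreeLT D (Δ_[h] u)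

namespace DegreeLT

theorem zero (D : ℕ) : DegreeLT D fun _ : V => (0 : C) := by
  induction D with
  | zero => rfl
  | succ D ih => intro h; simpa only [fwdDiff_const] using ih

theorem const (c : C) : DegreeLT 1 fun _ : V => c := fun h => by
  simpa only [fwdDiff_const] using zero 0

theorem succ {D : ℕ} {u : V → C} (hu : DegreeLT D u) : DegreeLT (D + 1) u := by
  induction D generalizing u with
  | zero => obtain rfl : u = 0 := hu; exact zero 1
  | succ D ih => exact fun h => ih (hu h)

theorem mono {D E : ℕ} (hDE : D ≤ E) {u : V → C} (hu : DegreeLT D u) : DegreeLT E u :=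
  Nat.le_induction hu (fun _ _ => succ) E hDE

theorem add {D : ℕ} {u v : V → C} (hu : DegreeLT D u) (hv : DegreeLT D v) :
    DegreeLT D fun n => u n + v n := by
  induction D generalizing u v with
  | zero => obtain ⟨rfl, rfl⟩ : u = 0 ∧ v = 0 := ⟨hu, hv⟩; exact funext fun _ => add_zero 0
  | succ D ih =>
    intro h
    have : Δ_[h] (fun n => u n + v n) = fun n => Δ_[h] u n + Δ_[h] v n := fwdDiff_add h u v
    rw [this]
    exact ih (hu h) (hv h)

theorem shift {D : ℕ} {u : V → C} (hu : DegreeLT D u) (a : V) :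
    DegreeLT D fun n => u (n + a) := by
  induction D generalizing u with
  | zero => obtain rfl : u = 0 := hu; rfl
  | succ D ih => intro h; rw [fwdDiff_comp_add_right]; exact ih (hu h)

theorem mul {R : Type*} [CommRing R] {D E : ℕ} {u v : V → R} (hu : DegreeLT D u)
    (hv : DegreeLT E v) : DegreeLT (D + E) fun n => u n * v n := by
  induction D generalizing E u v with
  | zero =>
    obtain rfl : u = 0 := hu
    simpa only [Pi.zero_apply, zero_mul] using zero _
  | succ D ihD =>
    induction E generalizing u v with
    | zero =>
      obtain rfl : v = 0 := hv
      simpa only [Pi.zero_apply, mul_zero] using zero _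
    | succ E ihE =>
      intro h
      rw [fwdDiff_mul]
      have hright : DegreeLT (D + 1 + E) fun n => Δ_[h] u n * v n := by
        simpa only [add_right_comm D 1 E, add_assoc] using ihD (hu h) hv
      exact (ihE (hu.shift h) (hv h)).add hright

theorem map {D : ℕ} {u : V → C} (hu : DegreeLT D u) {C' : Type*} [AddCommGroup C']
    (φ : C →+ C') : DegreeLT D fun n => φ (u n) := by
  induction D generalizing u with
  | zero => obtain rfl : u = 0 := hu; exact funext fun _ => map_zero φ
  | succ D ih => intro h; rw [fwdDiff_map_comp]; exact ih (hu h)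

theorem of_map_injective {D : ℕ} {u : V → C} {C' : Type*} [AddCommGroup C'] {φ : C →+ C'}
    (hφ : Function.Injective φ) (hu : DegreeLT D fun n => φ (u n)) : DegreeLT D u := by
  induction D generalizing u with
  | zero => exact funext fun n => hφ ((congrFun hu n).trans (map_zero φ).symm)
  | succ D ih =>
    intro h
    refine ih ?_
    rw [← fwdDiff_map_comp]
    exact hu h

theorem pi {ι : Type*} {D : ℕ} {u : V → ι → C} (hu : ∀ t, DegreeLT D fun n => u n t) :
    DegreeLT D u := by
  induction D generalizing u with
  | zero => exact funext fun n => funext fun t => congrFun (hu t) n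
  | succ D ih => exact fun h => ih fun t => hu t h

theorem of_addMonoidHom (φ : V →+ C) : DegreeLT 2 φ := fun h => by
  have : Δ_[h] φ = fun _ => φ h := by
    funext n
    simp only [fwdDiff, map_add, add_sub_cancel_left]
  rw [this]
  exact const (φ h)

theorem exists_eval {σ R : Type*} [CommRing R] (φ : V →+ σ → R) (Q : MvPolynomial σ R) :
    ∃ D, DegreeLT D fun n => MvPolynomial.eval (φ n) Q := by
  induction Q using MvPolynomial.induction_on with
  | C c => exact ⟨1, by simpa only [MvPolynomial.eval_C] using const c⟩
  | add P Q hP hQ =>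
    obtain ⟨⟨D, hD⟩, E, hE⟩ := And.intro hP hQ
    refine ⟨max D E, ?_⟩
    simpa only [map_add] using (hD.mono (le_max_left D E)).add (hE.mono (le_max_right D E))
  | mul_X P i hP =>
    obtain ⟨D, hD⟩ := hP
    refine ⟨D + 2, ?_⟩
    simp only [map_mul, MvPolynomial.eval_X]
    exact hD.mul (of_addMonoidHom ((Pi.evalAddMonoidHom (fun _ : σ => R) i).comp φ))

theorem nsmul_pow_eq_of_periods {D : ℕ} {u : V → C} (hu : DegreeLT D u) {P : ℕ}
    (hP : ∀ h, P • h ∈ periods u) (n m : V) : P ^ D • u n = P ^ D • u m := by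
  induction D generalizing u n m with
  | zero => obtain rfl : u = 0 := hu; rfl
  | succ D ih =>
    have hconst := ih (hu (m - n)) fun h => mem_periods_fwdDiff_comm.mpr <| by
      have : Δ_[P • h] u = fun _ => 0 := funext fun x => sub_eq_zero.mpr (hP h x)
      rw [this]
      exact fun _ => rfl
    have hsum := congrArg (P ^ D • ·) (sum_fwdDiff_add_nsmul u (m - n) n P)
    simp only [smul_sum, fun j : ℕ => hconst (n + j • (m - n)) n, hP (m - n) n, sub_self,
      smul_zero, sum_const, card_range] at hsum
    rw [smul_smul, ← pow_succ', fwdDiff, add_sub_cancel, smul_sub, sub_eq_zero] at hsum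
    exact hsum.symm

end DegreeLT

theorem IsPolyMap.exists_degreeLT {L d : ℕ} {q : (Fin L → ℤ) → Fin d → ℤ} (hq : IsPolyMap q) :
    ∃ D, DegreeLT D q := by
  obtain ⟨Q, hQ⟩ := hq
  choose D hD using fun t => DegreeLT.exists_eval ((Int.castAddHom ℚ).compLeft (Fin L)) (Q t)
  refine ⟨univ.sup D, .pi fun t => .of_map_injective (φ := Int.castAddHom ℚ)
    Int.cast_injective ?_⟩
  have hEval : (fun n => ((q n t : ℤ) : ℚ)) = _ := funext fun n => hQ n t
  exact (congrArg _ hEval).mpr ((hD t).mono (le_sup (mem_univ t)))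

theorem IsPolyMap.sub {L d : ℕ} {p q : (Fin L → ℤ) → Fin d → ℤ} (hp : IsPolyMap p)
    (hq : IsPolyMap q) : IsPolyMap fun n => p n - q n := by
  obtain ⟨⟨P, hP⟩, Q, hQ⟩ := And.intro hp hq
  exact ⟨P - Q, fun n t => by simp [hP n t, hQ n t]⟩

end Differences

section Weyl

open scoped fwdDiff

theorem finiteIndex_of_forall_exists_nsmul_mem {V : Type*} [AddCommGroup V] [AddGroup.FG V]
    {K : AddSubgroup V} (hK : ∀ v, ∃ m, 0 < m ∧ m • v ∈ K) : K.FiniteIndex := by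
  have htors : IsAddTorsion (V ⧸ K) := by
    rintro ⟨v⟩
    obtain ⟨m, hm, hmv⟩ := hK v
    exact isOfFinAddOrder_iff_nsmul_eq_zero.mpr
      ⟨m, hm, (QuotientAddGroup.eq_zero_iff (m • v)).mpr hmv⟩
  exact AddSubgroup.finiteIndex_iff_finite_quotient.mpr
    (AddCommGroup.finite_of_fg_isAddTorsion _ htors)

variable {V C : Type*} [AddCommGroup V] [AddCommGroup C]

/-- The group of directions `a` for which the difference `Δ_[a] u` has a finite-index group of
periods; for `u` a polynomial modulo `1` these are the `a` for which `Δ_[a] u` has no irrational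
coefficient apart from the constant one. -/
def rationalDirections (u : V → C) : AddSubgroup V where
  carrier := {a | (periods (Δ_[a] u)).FiniteIndex}
  zero_mem' := AddSubgroup.finiteIndex_of_le (H := ⊤) fun _ _ =>
    mem_periods_fwdDiff_comm.mpr (zero_mem _)
  add_mem' {a b} (_ : (periods _).FiniteIndex) (_ : (periods _).FiniteIndex) :=
    AddSubgroup.finiteIndex_of_le (H := periods (Δ_[a] u) ⊓ periods (Δ_[b] u)) fun _ h =>
      mem_periods_fwdDiff_comm.mpr <| add_mem (mem_periods_fwdDiff_comm.mp h.1)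
        (mem_periods_fwdDiff_comm.mp h.2)
  neg_mem' {a} (_ : (periods _).FiniteIndex) :=
    AddSubgroup.finiteIndex_of_le (H := periods (Δ_[a] u)) fun _ h =>
      mem_periods_fwdDiff_comm.mpr (neg_mem (mem_periods_fwdDiff_comm.mp h))

theorem mem_rationalDirections {u : V → C} {a : V} :
    a ∈ rationalDirections u ↔ (periods (Δ_[a] u)).FiniteIndex := Iff.rfl

theorem DegreeLT.exists_add_nsmul_eq_add {D : ℕ} {u : V → C} (hu : DegreeLT (D + 1) u)
    [hdir : (rationalDirections u).FiniteIndex] (h : V) :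
    ∃ Q, 0 < Q ∧ ∃ c, ∀ n, u (n + Q • h) = u n + c := by
  obtain ⟨m, hm, -, ha⟩ :=
    AddSubgroup.exists_nsmul_mem_of_index_ne_zero hdir.index_ne_zero h
  have hfin := mem_rationalDirections.mp ha
  set a := m • h
  set P := (periods (Δ_[a] u)).index
  set b := P • a
  have hP (x : V) : P • x ∈ periods (Δ_[b] u) :=
    periods_fwdDiff_le_nsmul u a P (AddSubgroup.nsmul_index_mem _ x)
  refine ⟨P ^ D * P * m, by have := hfin.index_ne_zero; positivity, P ^ D • Δ_[b] u 0, fun n => ?_⟩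
  have hperiod (j : ℕ) : Δ_[b] u (n + j • b) = Δ_[b] u n := nsmul_mem (hP a) j n
  have hsum := sum_fwdDiff_add_nsmul u b n (P ^ D)
  simp only [hperiod, sum_const, card_range, (hu b).nsmul_pow_eq_of_periods hP n 0] at hsum
  rw [hsum, mul_smul, mul_smul, add_sub_cancel]

end Weyl

section Characters

open scoped fwdDiff

variable {L : ℕ} {I : ℕ → Finset (Fin L → ℤ)} {D : ℕ}

theorem IsFolner.tendsto_avg_circle_of_fwdDiff (hI : IsFolner L I)
    {u : (Fin L → ℤ) → Additive Circle} {h : ℕ → Fin L → ℤ}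
    (hdiff : Pairwise fun i j =>
      Tendsto (fun N => avg (I N) fun n => ((Δ_[h j - h i] u n).toMul : ℂ)) atTop (nhds 0)) :
    Tendsto (fun N => avg (I N) fun n => ((u n).toMul : ℂ)) atTop (nhds 0) := by
  refine hI.tendsto_avg_zero_of_correlation (fun n => (Circle.norm_coe _).le) (h := h)
    fun i j hij => ?_
  set v := fun n => ((Δ_[h j - h i] u n).toMul : ℂ)
  have hinner (n : Fin L → ℤ) :
      inner ℝ ((u (n + h i)).toMul : ℂ) ((u (n + h j)).toMul : ℂ) = (v (n + h i)).re := by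
    have : n + h i + (h j - h i) = n + h j := by abel
    simp only [v, fwdDiff, this, Complex.inner, toMul_sub, div_eq_mul_inv, Circle.coe_mul,
      ← Circle.coe_inv_eq_conj]
  have hshift := hI.tendsto_avg_shift_sub (f := v) (fun n => (Circle.norm_coe _).le) (h i)
  have hzero : Tendsto (fun N => avg (I N) v) atTop (nhds 0) := hdiff hij
  have hlim := hshift.add hzero
  simp only [sub_add_cancel, add_zero] at hlim
  refine ((Complex.continuous_re.tendsto 0).comp hlim).congr fun N => ?_
  simp only [hinner]
  exact map_avg Complex.reCLM (I N) fun n => v (n + h i)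

theorem DegreeLT.tendsto_avg_circle {u : (Fin L → ℤ) → Additive Circle} (hu : DegreeLT D u)
    (hper : ¬ (periods u).FiniteIndex) (hI : IsFolner L I) :
    Tendsto (fun N => avg (I N) fun n => ((u n).toMul : ℂ)) atTop (nhds 0) := by
  induction D generalizing u with
  | zero =>
    obtain rfl : u = 0 := hu
    exact (hper (AddSubgroup.finiteIndex_of_le (H := ⊤) fun _ _ _ => rfl)).elim
  | succ D ih =>
    by_cases hdir : (rationalDirections u).FiniteIndex
    · obtain ⟨h, hh⟩ : ∃ h, ∀ m, 0 < m → m • h ∉ periods u := by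
        contrapose! hper
        exact finiteIndex_of_forall_exists_nsmul_mem hper
      obtain ⟨Q, hQ, c, hc⟩ := hu.exists_add_nsmul_eq_add h
      refine hI.tendsto_avg_zero_of_eigenfunction (fun n => (Circle.norm_coe _).le)
        (h := Q • h) (z := (c.toMul : ℂ)) (fun hc1 => hh Q hQ fun n => ?_) fun n => ?_
      · have : c = 0 := Circle.coe_eq_one.mp hc1
        rw [hc, this, add_zero]
      · rw [hc, toMul_add, Circle.coe_mul, mul_comm]
    · have : Infinite ((Fin L → ℤ) ⧸ rationalDirections u) :=
        not_finite_iff_infinite.mp (mt AddSubgroup.finiteIndex_iff_finite_quotient.mpr hdir)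
      let g := Infinite.natEmbedding ((Fin L → ℤ) ⧸ rationalDirections u)
      refine hI.tendsto_avg_circle_of_fwdDiff (h := fun i => (g i).out) fun i j hij =>
        ih (hu _) fun hfin => hij (g.injective ?_)
      have := QuotientAddGroup.eq_iff_sub_mem.mpr (mem_rationalDirections.mpr hfin)
      simpa only [QuotientAddGroup.out_eq'] using this.symm

theorem DegreeLT.exists_tendsto_avg_addChar {G : Type*} [AddCommGroup G] {p : (Fin L → ℤ) → G}
    (hp : DegreeLT D p) (χ : AddChar G Circle) (hI : IsFolner L I) :
    ∃ c, Tendsto (fun N => avg (I N) fun n => (χ (p n) : ℂ)) atTop (nhds c) := by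
  set u := fun n => χ.toAddMonoidHom (p n)
  by_cases hper : (periods u).FiniteIndex
  · have : (periods fun n => (χ (p n) : ℂ)).FiniteIndex :=
      AddSubgroup.finiteIndex_of_le (H := periods u) fun _ h n =>
        congrArg (fun z : Additive Circle => (z.toMul : ℂ)) (h n)
    exact hI.exists_tendsto_avg
  · exact ⟨0, (hp.map χ.toAddMonoidHom).tendsto_avg_circle hper hI⟩

end Characters

section Spectral

open WeakDual
open scoped CompactlySupported

variable {H : Type*} [NormedAddCommGroup H] [InnerProductSpace ℂ H] [CompleteSpace H]

theorem re_inner_star_mul_self (T : H →L[ℂ] H) (f : H) :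
    RCLike.re (inner ℂ f ((star T * T) f)) = ‖T f‖ ^ 2 := by
  rw [mul_apply_eq_comp, ContinuousLinearMap.star_eq_adjoint,
    ContinuousLinearMap.adjoint_inner_right, inner_self_eq_norm_sq]

section ContinuousFunctions

variable {K : Type*} [TopologicalSpace K] [CompactSpace K] [T2Space K] [MeasurableSpace K]
  [BorelSpace K]

theorem exists_measure_norm_sq_eq_integral (π : C(K, ℂ) →⋆ₐ[ℂ] (H →L[ℂ] H)) (f : H) :
    ∃ σ : Measure K, IsFiniteMeasure σ ∧ ∀ F, ‖π F f‖ ^ 2 = ∫ x, ‖F x‖ ^ 2 ∂σ := by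
  let Λ₀ : C_c(K, ℝ) →ₗ[ℝ] ℝ :=
    { toFun := fun φ => RCLike.re (inner ℂ f (π ((φ : C(K, ℝ)).realToRCLike ℂ) f))
      map_add' := fun φ ψ => by
        have : ((φ + ψ : C_c(K, ℝ)) : C(K, ℝ)).realToRCLike ℂ =
            (φ : C(K, ℝ)).realToRCLike ℂ + (ψ : C(K, ℝ)).realToRCLike ℂ := by ext; simp
        simp [this]
      map_smul' := fun r φ => by
        have : ((r • φ : C_c(K, ℝ)) : C(K, ℝ)).realToRCLike ℂ =
            (r : ℂ) • (φ : C(K, ℝ)).realToRCLike ℂ := by ext; simp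
        rw [this, map_smul, smul_apply, inner_smul_right]
        exact RCLike.re_ofReal_mul _ _ }
  have hsq (φ : C_c(K, ℝ)) (F : C(K, ℂ)) (hF : ∀ x, φ x = ‖F x‖ ^ 2) : Λ₀ φ = ‖π F f‖ ^ 2 := by
    have : (φ : C(K, ℝ)).realToRCLike ℂ = star F * F := by
      ext x
      simp [hF, Complex.conj_mul']
    rw [← re_inner_star_mul_self, ← map_star, ← map_mul, ← this]
    rfl
  let Λ : C_c(K, ℝ) →ₚ[ℝ] ℝ := .mk₀ Λ₀ fun φ hφ => by
    rw [hsq φ ⟨fun x => (√(φ x) : ℂ), by fun_prop⟩ fun x => by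
      simp [Real.sq_sqrt (show 0 ≤ φ x from hφ x)]]
    positivity
  refine ⟨RealRMK.rieszMeasure Λ, inferInstance, fun F => ?_⟩
  let φ : C_c(K, ℝ) := ⟨⟨fun x => ‖F x‖ ^ 2, by fun_prop⟩, .of_compactSpace _⟩
  exact ((RealRMK.integral_rieszMeasure Λ φ).trans (hsq φ F fun _ => rfl)).symm

theorem cauchySeq_apply_of_tendsto_pointwise (π : C(K, ℂ) →⋆ₐ[ℂ] (H →L[ℂ] H)) (f : H)
    {F : ℕ → C(K, ℂ)} {C : ℝ} (hC : ∀ N x, ‖F N x‖ ≤ C)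
    (hF : ∀ x, ∃ c, Tendsto (fun N => F N x) atTop (nhds c)) :
    CauchySeq fun N => π (F N) f := by
  obtain ⟨σ, hσ, hspec⟩ := exists_measure_norm_sq_eq_integral π f
  have hlim : Tendsto (fun N : ℕ × ℕ => ∫ x, ‖(F N.1 - F N.2) x‖ ^ 2 ∂σ) atTop
      (nhds (∫ _, 0 ∂σ)) := by
    refine tendsto_integral_filter_of_dominated_convergence (fun _ => (C + C) ^ 2)
      (.of_forall fun N => by fun_prop) (.of_forall fun N => ae_of_all _ fun x => ?_)
      (integrable_const _) (ae_of_all _ fun x => ?_)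
    · rw [Real.norm_of_nonneg (sq_nonneg _)]
      exact pow_le_pow_left₀ (norm_nonneg _)
        ((norm_sub_le _ _).trans (add_le_add (hC N.1 x) (hC N.2 x))) 2
    · obtain ⟨c, hc⟩ := hF x
      rw [← prod_atTop_atTop_eq]
      simpa using ((hc.comp tendsto_fst).sub (hc.comp tendsto_snd)).norm.pow 2
  rw [integral_zero] at hlim
  rw [cauchySeq_iff_tendsto_dist_atTop_0, ← Real.sqrt_zero]
  refine hlim.sqrt.congr fun N => ?_
  rw [← hspec, Real.sqrt_sq (norm_nonneg _), map_sub, dist_eq_norm]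
  rfl

end ContinuousFunctions

variable {G V : Type*} [AddCommGroup G] {p : V → G} {I : ℕ → Finset V}

theorem cauchySeq_avg_of_commCStarAlgebra {A : Type*} [CommCStarAlgebra A]
    (ρ : A →⋆ₐ[ℂ] (H →L[ℂ] H)) (W : AddChar G (unitary A))
    (hp : ∀ χ : AddChar G Circle,
      ∃ c, Tendsto (fun N => avg (I N) fun n => (χ (p n) : ℂ)) atTop (nhds c)) (f : H) :
    CauchySeq fun N => avg (I N) fun n => ρ (W (p n)) f := by
  borelize ↥(characterSpace ℂ A)
  let Γ := gelfandStarTransform A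
  let a (N : ℕ) : A := avg (I N) fun n => (W (p n) : A)
  let X (χ : characterSpace ℂ A) : AddChar G Circle :=
    { toFun := fun g => ⟨χ (W g), mem_sphere_zero_iff_norm.mpr
        (CStarRing.norm_of_mem_unitary (Unitary.map_mem χ (W g).2))⟩
      map_zero_eq_one' := Circle.ext (by simp)
      map_add_eq_mul' := fun g h => Circle.ext <|
        (congrArg (fun w : unitary A => χ (w : A)) (W.map_add_eq_mul g h)).trans (map_mul χ _ _) }
  have hX (N : ℕ) (χ : characterSpace ℂ A) : Γ (a N) χ = avg (I N) fun n => (X χ (p n) : ℂ) :=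
    map_avg χ (I N) _
  have hcauchy := cauchySeq_apply_of_tendsto_pointwise (F := fun N => Γ (a N)) (C := 1)
    (ρ.comp (Γ.symm : C(characterSpace ℂ A, ℂ) →⋆ₐ[ℂ] A)) f
    (fun N χ => by rw [hX]; exact norm_avg_le zero_le_one fun n => (Circle.norm_coe _).le)
    (fun χ => by simpa only [hX] using hp (X χ))
  have hρ (N : ℕ) : ρ (a N) f = avg (I N) fun n => ρ (W (p n)) f := by
    rw [map_avg ρ]
    exact map_avg (ContinuousLinearMap.apply ℂ H f) (I N) _
  simpa [hρ] using hcauchy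

theorem cauchySeq_avg_of_unitary (U : AddChar G (unitary (H →L[ℂ] H)))
    (hp : ∀ χ : AddChar G Circle,
      ∃ c, Tendsto (fun N => avg (I N) fun n => (χ (p n) : ℂ)) atTop (nhds c)) (f : H) :
    CauchySeq fun N => avg (I N) fun n => (U (p n) : H →L[ℂ] H) f := by
  let S := StarAlgebra.adjoin ℂ (Set.range fun g => (U g : H →L[ℂ] H))
  let A := S.topologicalClosure
  have hcomm (g h : G) : (U g * U h : H →L[ℂ] H) = U h * U g := by
    exact_mod_cast congrArg Subtype.val
      (((U.map_add_eq_mul g h).symm.trans (congrArg U (add_comm g h))).trans (U.map_add_eq_mul h g))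
  have hstar (g : G) : star (U g : H →L[ℂ] H) = U (-g) := by
    rw [AddChar.map_neg_eq_inv]
    rfl
  have hS : ∀ x y : S, x * y = y * x := by
    have := StarAlgebra.isMulCommutative_adjoin (s := Set.range fun g => (U g : H →L[ℂ] H)) ℂ
      (by rintro _ ⟨g, rfl⟩ _ ⟨h, rfl⟩; exact hcomm g h)
      (by rintro _ ⟨g, rfl⟩ _ ⟨h, rfl⟩; rw [hstar]; exact hcomm g _)
    exact this.is_comm.comm
  have : IsClosed (A : Set (H →L[ℂ] H)) := S.isClosed_topologicalClosure
  let _ : CommCStarAlgebra A := { mul_comm := (S.commRingTopologicalClosure hS).mul_comm }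
  have hmem (g : G) : (U g : H →L[ℂ] H) ∈ A :=
    S.le_topologicalClosure (StarAlgebra.subset_adjoin ℂ _ ⟨g, rfl⟩)
  let W : AddChar G (unitary A) :=
    { toFun := fun g => ⟨⟨U g, hmem g⟩, Unitary.mem_iff.mpr
        ⟨Subtype.ext (Unitary.coe_star_mul_self (U g)),
          Subtype.ext (Unitary.coe_mul_star_self (U g))⟩⟩
      map_zero_eq_one' := by ext1; ext1; simp
      map_add_eq_mul' := fun g h => by ext1; ext1; simp [AddChar.map_add_eq_mul] }
  exact cauchySeq_avg_of_commCStarAlgebra A.subtype W hp f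

end Spectral

section Koopman

variable {X : Type*} [MeasurableSpace X] {μ : Measure X}

theorem coeFn_avg_toLp {V E : Type*} [NormedAddCommGroup E] [NormedSpace ℝ E] {r : ℝ≥0∞}
    {f : V → X → E} (hf : ∀ n, MemLp (f n) r μ) (s : Finset V) :
    (avg s fun n => (hf n).toLp (f n) : Lp E r μ) =ᵐ[μ] fun x => avg s fun n => f n x := by
  have hcoe : ∀ᵐ x ∂μ, ∀ n ∈ s, (hf n).toLp (f n) x = f n x :=
    (ae_ball_iff s.countable_toSet).mpr fun n _ => (hf n).coeFn_toLp
  filter_upwards [Lp.coeFn_smul (#s : ℝ)⁻¹ (∑ n ∈ s, (hf n).toLp (f n)),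
    Lp.coeFn_finsetSum s fun n => (hf n).toLp (f n), hcoe] with x hsmul hsum hcoe
  simp only [avg]
  rw [hsmul, Pi.smul_apply, hsum, Finset.sum_apply, sum_congr rfl hcoe]

variable {G : Type*} [AddCommGroup G] {T : G → X → X}

/-- The Koopman representation `g ↦ (f ↦ f ∘ T g)` of a measure-preserving action `T` of an
abelian group, as a homomorphism to the unitary operators on `L²(μ)`. -/
def koopman (hT0 : T 0 = id) (hTadd : ∀ g h, T (g + h) = T g ∘ T h)
    (hTmp : ∀ g, MeasurePreserving (T g) μ μ) : AddChar G (unitary (Lp ℂ 2 μ →L[ℂ] Lp ℂ 2 μ)) :=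
  have hzero (F : Lp ℂ 2 μ) : Lp.compMeasurePreserving (T 0) (hTmp 0) F = F := by
    simp only [hT0]
    exact Lp.compMeasurePreserving_id_apply F
  have hadd (g h : G) (F : Lp ℂ 2 μ) : Lp.compMeasurePreserving (T (g + h)) (hTmp (g + h)) F =
      Lp.compMeasurePreserving (T g) (hTmp g) (Lp.compMeasurePreserving (T h) (hTmp h) F) := by
    simp only [add_comm g h, hTadd h g]
    exact Lp.compMeasurePreserving_comp_apply F (hTmp h) (hTmp g)
  { toFun := fun g => Unitary.linearIsometryEquiv.symm <|
      .ofSurjective (Lp.compMeasurePreservingₗᵢ ℂ (T g) (hTmp g)) fun F =>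
        ⟨Lp.compMeasurePreserving (T (-g)) (hTmp (-g)) F, by
          have := (hadd g (-g) F).symm
          simp only [add_neg_cancel, hzero] at this
          exact this⟩
    map_zero_eq_one' := Subtype.ext (ContinuousLinearMap.ext hzero)
    map_add_eq_mul' := fun g h => Subtype.ext (ContinuousLinearMap.ext (hadd g h)) }

theorem koopman_toLp (hT0 : T 0 = id) (hTadd : ∀ g h, T (g + h) = T g ∘ T h)
    (hTmp : ∀ g, MeasurePreserving (T g) μ μ) {f : X → ℂ} (hf : MemLp f 2 μ) (g : G) :
    (koopman hT0 hTadd hTmp g : Lp ℂ 2 μ →L[ℂ] Lp ℂ 2 μ) (hf.toLp f) =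
      (hf.comp_measurePreserving (hTmp g)).toLp fun x => f (T g x) :=
  Lp.toLp_compMeasurePreserving hf (hTmp g)

end Koopman

section WeakErgodicity

variable {X : Type*} [MeasurableSpace X] {μ : Measure X} {d L : ℕ} {T : (Fin d → ℤ) → X → X}

/-- The weak form of `ErgodicSeq`: Følner averages of `f ∘ T_{p(n)}` converge to `∫ f dμ` when
tested against bounded measurable functions `g`, rather than in `L²(μ)`. -/
def WeaklyErgodicSeq (μ : Measure X) (T : (Fin d → ℤ) → X → X) (p : (Fin L → ℤ) → Fin d → ℤ) :
    Prop :=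
  ∀ f g : X → ℂ, Measurable f → Measurable g → (∃ C, ∀ x, ‖f x‖ ≤ C) → (∃ C, ∀ x, ‖g x‖ ≤ C) →
    ∀ I : ℕ → Finset (Fin L → ℤ), IsFolner L I →
      Tendsto (fun N => avg (I N) fun n => ∫ x, f (T (p n) x) * g x ∂μ) atTop
        (nhds ((∫ x, f x ∂μ) * ∫ x, g x ∂μ))

theorem Lp_eq_of_forall_setIntegral_eq [IsFiniteMeasure μ] {E : Type*} [NormedAddCommGroup E]
    [NormedSpace ℝ E] [CompleteSpace E] {r : ℝ≥0∞} (hr : 1 ≤ r) {F F' : Lp E r μ}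
    (h : ∀ s, MeasurableSet s → ∫ x in s, F x ∂μ = ∫ x in s, F' x ∂μ) : F = F' := by
  have hint (F : Lp E r μ) : Integrable F μ := (Lp.memLp F).integrable hr
  exact Lp.ext ((hint F).ae_eq_of_forall_setIntegral_eq _ _ (hint F') fun s hs _ => h s hs)

theorem WeaklyErgodicSeq.tendsto_avg_koopman [IsFiniteMeasure μ] {p : (Fin L → ℤ) → Fin d → ℤ}
    (hweak : WeaklyErgodicSeq μ T p) (hp : IsPolyMap p) (hT0 : T 0 = id)
    (hTadd : ∀ g h, T (g + h) = T g ∘ T h) (hTmp : ∀ g, MeasurePreserving (T g) μ μ)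
    {f : X → ℂ} (hf : Measurable f) (hbdd : ∃ C, ∀ x, ‖f x‖ ≤ C) (hfL : MemLp f 2 μ)
    {I : ℕ → Finset (Fin L → ℤ)} (hI : IsFolner L I) :
    Tendsto (fun N => avg (I N) fun n =>
        (koopman hT0 hTadd hTmp (p n) : Lp ℂ 2 μ →L[ℂ] Lp ℂ 2 μ) (hfL.toLp f)) atTop
      (nhds (Lp.const 2 μ (∫ x, f x ∂μ))) := by
  obtain ⟨D, hD⟩ := hp.exists_degreeLT
  obtain ⟨z, hz⟩ := cauchySeq_tendsto_of_complete <|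
    cauchySeq_avg_of_unitary (koopman hT0 hTadd hTmp)
      (fun χ => hD.exists_tendsto_avg_addChar χ hI) (hfL.toLp f)
  suffices z = Lp.const 2 μ (∫ x, f x ∂μ) by rwa [← this]
  refine Lp_eq_of_forall_setIntegral_eq one_le_two fun s hs => ?_
  let ℓ := innerSL ℂ (indicatorConstLp 2 hs (measure_ne_top μ s) (1 : ℂ))
  have hℓ (F : Lp ℂ 2 μ) : ℓ F = ∫ x in s, F x ∂μ :=
    L2.inner_indicatorConstLp_one hs (measure_ne_top μ s) F
  have hℓkoopman (n : Fin L → ℤ) :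
      ℓ ((koopman hT0 hTadd hTmp (p n) : Lp ℂ 2 μ →L[ℂ] Lp ℂ 2 μ) (hfL.toLp f)) =
        ∫ x, f (T (p n) x) * s.indicator 1 x ∂μ := by
    rw [hℓ, koopman_toLp, integral_congr_ae (ae_restrict_of_ae (MemLp.coeFn_toLp _)),
      ← integral_indicator hs]
    exact integral_congr_ae (ae_of_all _ fun x => by by_cases hx : x ∈ s <;> simp [hx])
  have hstrong := (ℓ.continuous.tendsto z).comp hz
  have hone : ∃ C : ℝ, ∀ x, ‖s.indicator (1 : X → ℂ) x‖ ≤ C :=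
    ⟨1, fun x => (norm_indicator_le_norm_self _ x).trans (by simp)⟩
  have hlim := hweak f (s.indicator 1) hf (measurable_one.indicator hs) hbdd hone I hI
  simp only [← hℓkoopman, ← map_avg ℓ] at hlim
  rw [← hℓ, tendsto_nhds_unique hstrong hlim, integral_indicator hs,
    integral_congr_ae (ae_restrict_of_ae (Lp.coeFn_const 2 μ _))]
  simp [mul_comm]

theorem WeaklyErgodicSeq.ergodicSeq [IsFiniteMeasure μ] {p : (Fin L → ℤ) → Fin d → ℤ}
    (hweak : WeaklyErgodicSeq μ T p) (hp : IsPolyMap p) (hT0 : T 0 = id)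
    (hTadd : ∀ g h, T (g + h) = T g ∘ T h) (hTmp : ∀ g, MeasurePreserving (T g) μ μ) :
    ErgodicSeq μ T p := by
  rintro f hf ⟨C, hC⟩ I hI
  have hfL : MemLp f 2 μ := .of_bound hf.aestronglyMeasurable C (ae_of_all _ hC)
  have hlim := hweak.tendsto_avg_koopman hp hT0 hTadd hTmp hf ⟨C, hC⟩ hfL hI
  simp only [koopman_toLp] at hlim
  refine ((Lp.tendsto_Lp_iff_tendsto_eLpNorm' _ _).mp hlim).congr fun N => eLpNorm_congr_ae ?_
  filter_upwards [coeFn_avg_toLp (fun n => hfL.comp_measurePreserving (hTmp (p n))) (I N),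
    Lp.coeFn_const 2 μ (∫ x, f x ∂μ)] with x havg hconst
  rw [Pi.sub_apply, hconst, ← avg_eq_inv_mul_sum]
  exact congrArg (· - ∫ x, f x ∂μ) havg

end WeakErgodicity

section JointErgodicity

variable {X : Type*} [MeasurableSpace X] {μ : Measure X}

theorem tendsto_integral_of_tendsto_eLpNorm_sub_const [IsProbabilityMeasure μ] {E : Type*}
    [NormedAddCommGroup E] [NormedSpace ℝ E] [CompleteSpace E] {r : ℝ≥0∞} (hr : 1 ≤ r)
    {Y : ℕ → X → E} {c : E} (hY : ∀ N, Integrable (Y N) μ)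
    (h : Tendsto (fun N => eLpNorm (fun x => Y N x - c) r μ) atTop (nhds 0)) :
    Tendsto (fun N => ∫ x, Y N x ∂μ) atTop (nhds c) := by
  have := tendsto_integral_of_L1' (fun _ => c) aestronglyMeasurable_const (.of_forall hY) <|
    tendsto_of_tendsto_of_tendsto_of_le_of_le tendsto_const_nhds h (fun _ => zero_le) fun N =>
      eLpNorm_le_eLpNorm_of_exponent_le hr ((hY N).sub (integrable_const c)).aestronglyMeasurable
  simpa only [integral_const, probReal_univ, one_smul] using this

theorem integral_comp_mul_comp_eq {G : Type*} [AddGroup G] {T : G → X → X}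
    (hTadd : ∀ g h, T (g + h) = T g ∘ T h) (hTmp : ∀ g, MeasurePreserving (T g) μ μ) {f g : X → ℂ}
    (hf : Measurable f) (hg : Measurable g) (a b : G) :
    ∫ x, f (T a x) * g (T b x) ∂μ = ∫ x, f (T (a - b) x) * g x ∂μ := by
  have hmeas : Measurable fun x => f (T (a - b) x) * g x := (hf.comp (hTmp _).measurable).mul hg
  have hmap := integral_map (hTmp b).aemeasurable hmeas.aestronglyMeasurable
  rw [(hTmp b).map_eq] at hmap
  have hsub (x : X) : T (a - b) (T b x) = T a x := by
    rw [← Function.comp_apply (f := T _), ← hTadd, sub_add_cancel]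
  simp only [hmap, hsub]

namespace JointlyErgodic

variable [IsProbabilityMeasure μ] {d k L : ℕ} {T : (Fin d → ℤ) → X → X}
  {q : Fin k → (Fin L → ℤ) → Fin d → ℤ}

theorem tendsto_avg_integral_prod (hq : JointlyErgodic μ T q) (hT : ∀ g, Measurable (T g))
    {f : Fin k → X → ℂ} (hf : ∀ i, Measurable (f i)) (hbdd : ∀ i, ∃ C, ∀ x, ‖f i x‖ ≤ C)
    {I : ℕ → Finset (Fin L → ℤ)} (hI : IsFolner L I) :
    Tendsto (fun N => avg (I N) fun n => ∫ x, ∏ i, f i (T (q i n) x) ∂μ) atTop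
      (nhds (∏ i, ∫ x, f i x ∂μ)) := by
  choose C hC using hbdd
  have hint (n : Fin L → ℤ) : Integrable (fun x => ∏ i, f i (T (q i n) x)) μ := by
    refine .of_bound (C := ∏ i, C i)
      (measurable_fun_prod _ fun i _ => (hf i).comp (hT _)).aestronglyMeasurable
      (ae_of_all _ fun x => ?_)
    rw [norm_prod]
    exact prod_le_prod (fun i _ => norm_nonneg _) fun i _ => hC i _
  refine (tendsto_integral_of_tendsto_eLpNorm_sub_const one_le_two
    (fun N => (integrable_finsetSum (I N) fun n _ => hint n).const_mul _)
    (hq f hf (fun i => ⟨C i, hC i⟩) I hI)).congr fun N => ?_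
  rw [integral_const_mul, integral_finsetSum _ fun n _ => hint n, avg_eq_inv_mul_sum]

theorem tendsto_avg_integral_mul (hq : JointlyErgodic μ T q) (hT : ∀ g, Measurable (T g))
    {i j : Fin k} (hij : i ≠ j) {f g : X → ℂ} (hf : Measurable f) (hg : Measurable g)
    (hfb : ∃ C, ∀ x, ‖f x‖ ≤ C) (hgb : ∃ C, ∀ x, ‖g x‖ ≤ C)
    {I : ℕ → Finset (Fin L → ℤ)} (hI : IsFolner L I) :
    Tendsto (fun N => avg (I N) fun n => ∫ x, f (T (q i n) x) * g (T (q j n) x) ∂μ) atTop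
      (nhds ((∫ x, f x ∂μ) * ∫ x, g x ∂μ)) := by
  let F (l : Fin k) : X → ℂ := if l = i then f else if l = j then g else 1
  have hFi : F i = f := if_pos rfl
  have hFj : F j = g := (if_neg hij.symm).trans (if_pos rfl)
  have hF1 (l : Fin k) (hl : l ≠ i ∧ l ≠ j) : F l = 1 := (if_neg hl.1).trans (if_neg hl.2)
  have hFm (l : Fin k) : Measurable (F l) := by
    unfold F
    split_ifs
    exacts [hf, hg, measurable_one]
  have hFb (l : Fin k) : ∃ C, ∀ x, ‖F l x‖ ≤ C := by
    unfold F
    split_ifs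
    exacts [hfb, hgb, ⟨1, by simp⟩]
  have hprod {φ : Fin k → (X → ℂ) → ℂ} (hφ : ∀ l, φ l 1 = 1) :
      ∏ l, φ l (F l) = φ i f * φ j g := by
    rw [prod_eq_mul i j hij (fun l _ hl => by rw [hF1 l hl, hφ]) (by simp) (by simp), hFi, hFj]
  have hlim := hq.tendsto_avg_integral_prod hT hFm hFb hI
  rw [hprod (φ := fun _ h => ∫ x, h x ∂μ) fun _ => by simp] at hlim
  have hpoint (n : Fin L → ℤ) (x : X) :
      ∏ l, F l (T (q l n) x) = f (T (q i n) x) * g (T (q j n) x) :=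
    hprod (φ := fun l h => h (T (q l n) x)) fun _ => rfl
  simpa only [hpoint] using hlim

theorem weaklyErgodicSeq_sub (hq : JointlyErgodic μ T q)
    (hTadd : ∀ g h, T (g + h) = T g ∘ T h) (hTmp : ∀ g, MeasurePreserving (T g) μ μ)
    {i j : Fin k} (hij : i ≠ j) : WeaklyErgodicSeq μ T fun n => q i n - q j n := by
  intro f g hf hg hfb hgb I hI
  simpa only [integral_comp_mul_comp_eq hTadd hTmp hf hg] using
    hq.tendsto_avg_integral_mul (fun v => (hTmp v).measurable) hij hf hg hfb hgb hI

end JointlyErgodic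

end JointErgodicity

theorem stmt2_general {X : Type*} [MeasurableSpace X] {μ : Measure X} [IsProbabilityMeasure μ]
    {d k L : ℕ} {T : (Fin d → ℤ) → X → X}
    (hT0 : T 0 = id) (hTadd : ∀ g h, T (g + h) = T g ∘ T h)
    (hTmp : ∀ g, MeasurePreserving (T g) μ μ) {q : Fin k → (Fin L → ℤ) → Fin d → ℤ}
    (hje : JointlyErgodic μ T q) {i j : Fin k} (hij : i ≠ j)
    (hpoly : IsPolyMap fun n => q i n - q j n) : ErgodicSeq μ T fun n => q i n - q j n :=
  (hje.weaklyErgodicSeq_sub hTadd hTmp hij).ergodicSeq hpoly hT0 hTadd hTmp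

/-- If the tuple `(T_{q_1(n)}, …, T_{q_k(n)})_{n∈ℤ^L}` is jointly ergodic for `μ`, then for
all `i ≠ j` the sequence `(T_{q_i(n) − q_j(n)})_{n∈ℤ^L}` is ergodic for `μ`. -/
theorem stmt2 {X : Type*} [MeasurableSpace X] (μ : Measure X) [IsProbabilityMeasure μ]
    (d k L : ℕ) (hd : 0 < d) (hk : 0 < k) (hL : 0 < L)
    (T : (Fin d → ℤ) → X → X)
    (hT0 : T 0 = id) (hTadd : ∀ g h, T (g + h) = T g ∘ T h)
    (hTmp : ∀ g, MeasurePreserving (T g) μ μ)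
    (q : Fin k → (Fin L → ℤ) → Fin d → ℤ)
    (hq : ∀ i, IsPolyMap (q i))
    (hje : JointlyErgodic μ T q) :
    ∀ i j : Fin k, i ≠ j → ErgodicSeq μ T (fun n => q i n - q j n) := by
  intro i j hij
  exact stmt2_general hT0 hTadd hTmp hje hij ((hq i).sub (hq j))
end
end

section
/- Let (X, ℬ, μ) be a probability space, k, L ∈ ℕ, and let T_{i,j} (1 ≤ i ≤ k, 1 ≤ j ≤ L) be pairwise commuting invertible measure-preserving transformations of X. For h = (h₁,…,h_L) ∈ ℤ^L write T_i^h := T_{i,1}^{h₁} ∘ ⋯ ∘ T_{i,L}^{h_L}, and for n ∈ ℤ^L let R_n := T_1^n × ⋯ × T_k^n acting on (X^k, μ^{⊗k}). Let 𝓘_i denote the σ-algebra of measurable sets A ⊆ X with T_{i,j}^{-1}A = A for all 1 ≤ j ≤ L. Let P(n) = α·n + β with α ∈ ℝ^L, β ∈ ℝ, and let f₁,…,f_k ∈ L^∞(μ) with ‖f_i‖_∞ ≤ 1 for all i; set f := f₁⊗⋯⊗f_k. Then for every 1 ≤ i ≤ k: sup over Følner sequences (I_N) in ℤ^L of limsup_{N→∞}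 ‖ |I_N|^{-1} Σ_{n∈I_N} e^{2πiP(n)} (f ∘ R_n) ‖_{L²(μ^{⊗k})}^4 ≤ 16 · limsup_{N→∞} (2N+1)^{-L} Σ_{h∈[−N,N]^L} ∫_X | E( (f_i ∘ T_i^h) · conj(f_i) | 𝓘_i ) |² dμ. -/
open MeasureTheory Filter Finset
open scoped ENNReal symmDiff

noncomputable section

/-- The supremum over all Følner sequences of `ℤ^L` of a quantity attached to each
Følner sequence. -/
def folnerSup (L : ℕ) (F : (ℕ → Finset (Fin L → ℤ)) → ℝ) : ℝ :=
  sSup {x | ∃ I, IsFolner L I ∧ x = F I}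

/-- `e(x) = e^{2πix}`. -/
def e2pi (x : ℝ) : ℂ := Complex.exp (2 * Real.pi * Complex.I * x)

/-- The σ-algebra of measurable sets invariant under every transformation of the
family `T`. -/
def invSigma {ι X : Type*} [MeasurableSpace X] (T : ι → X → X) : MeasurableSpace X where
  MeasurableSet' A := MeasurableSet A ∧ ∀ a, T a ⁻¹' A = A
  measurableSet_empty := ⟨MeasurableSet.empty, fun _ => Set.preimage_empty⟩
  measurableSet_compl A hA := ⟨hA.1.compl, fun a => by rw [Set.preimage_compl, hA.2 a]⟩
  measurableSet_iUnion f hf :=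
    ⟨MeasurableSet.iUnion fun n => (hf n).1, fun a => by
      simp only [Set.preimage_iUnion]
      exact Set.iUnion_congr fun n => (hf n).2 a⟩

/-!
The operators `V n F = e(α·n) (F ∘ R n)` form an isometric representation of `ℤ^L` on `L²`, so by
the mean ergodic theorem their averages along *every* Følner sequence converge to the same limit
`p`, the projection of `F` onto the vectors fixed by `V`; the phase `β` only multiplies the averages
by a unimodular constant. Computing `p` along the cubes instead,
`‖p‖⁴ = |⟪p, F⟫|² = lim |⟪avg_h V h F, F⟫|²`, which by Cauchy–Schwarz is at most the limsup of the
cube averages of `|⟪V h F, F⟫|²`. For `F = ⨂ i, f i` the correlation factors over the coordinates,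
each factor has modulus at most `1`, and Jensen's inequality bounds the `i`-th one, squared, by
`∫ |E((f i ∘ S i h) · conj (f i) | 𝓘)|²` for any sub-σ-algebra `𝓘`.
-/

section Finset

variable {G H : Type*} [DecidableEq G]

theorem card_symmDiff_eq_card_sdiff_add_card_sdiff (s t : Finset G) :
    #(s ∆ t) = #(s \ t) + #(t \ s) :=
  card_union_of_disjoint disjoint_sdiff_sdiff

theorem norm_sum_sub_sum_le_card_symmDiff_mul [SeminormedAddCommGroup H] {v : G → H} {C : ℝ}
    (hv : ∀ n, ‖v n‖ ≤ C) (s t : Finset G) :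
    ‖∑ n ∈ s, v n - ∑ n ∈ t, v n‖ ≤ #(s ∆ t) * C := by
  have hsum (u : Finset G) : ‖∑ n ∈ u, v n‖ ≤ #u * C := by
    simpa using norm_sum_le_of_le u fun n _ => hv n
  rw [← sum_sdiff_sub_sum_sdiff, card_symmDiff_eq_card_sdiff_add_card_sdiff, Nat.cast_add, add_mul]
  exact (norm_sub_le _ _).trans (add_le_add (hsum _) (hsum _))

theorem card_symmDiff_eq_two_mul_card_sub_card_inter {s t : Finset G} (h : #s = #t) :
    (#(s ∆ t) : ℝ) = 2 * (#t - #(s ∩ t)) := by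
  have hs := card_sdiff_add_card_inter s t
  have ht := card_sdiff_add_card_inter t s
  rw [inter_comm] at ht
  have hnat : #(s ∆ t) + 2 * #(s ∩ t) = 2 * #t := by
    rw [card_symmDiff_eq_card_sdiff_add_card_sdiff]
    lia
  have hreal : (#(s ∆ t) : ℝ) + 2 * #(s ∩ t) = 2 * #t := by exact_mod_cast hnat
  linarith

end Finset

/-! ### The mean ergodic theorem -/

section MeanErgodic

variable {G ι 𝕜 H : Type*} [RCLike 𝕜] [NormedAddCommGroup H] [InnerProductSpace 𝕜 H]
  {V : G → H →L[𝕜] H} {x : H}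

theorem tendsto_zero_of_mem_topologicalClosure {l : Filter ι} {A : ι → H →L[𝕜] H}
    (hA : ∀ n, ‖A n‖ ≤ 1) {K : Submodule 𝕜 H}
    (hK : ∀ y ∈ K, Tendsto (fun n => A n y) l (nhds 0)) (hx : x ∈ K.topologicalClosure) :
    Tendsto (fun n => A n x) l (nhds 0) := by
  have hequi : Equicontinuous fun n => (A n : H → H) :=
    (LipschitzWith.uniformEquicontinuous _ 1
      fun n => (A n).lipschitz.weaken (hA n)).equicontinuous
  exact closure_minimal hK (hequi.isClosed_setOfPred_tendsto continuous_const) hx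

theorem norm_inner_starProjection_self (K : Submodule 𝕜 H) [K.HasOrthogonalProjection] (x : H) :
    ‖inner 𝕜 (K.starProjection x) x‖ = ‖K.starProjection x‖ ^ 2 := by
  have hidem : K.starProjection (K.starProjection x) = K.starProjection x :=
    Submodule.starProjection_eq_self_iff.2 (K.starProjection_apply_mem x)
  rw [← hidem, K.inner_starProjection_left_eq_right, hidem, inner_self_eq_norm_sq_to_K]
  simp

theorem orthogonal_range_sub_one_le_eqLocus [CompleteSpace H] {f : H →L[𝕜] H} (hf : ‖f‖ ≤ 1) :
    (f - 1).rangeᗮ ≤ f.eqLocus (1 : H →L[𝕜] H) := by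
  intro x hx
  have hinner : ∀ y, inner 𝕜 (f y) x = inner 𝕜 y x := by
    simpa [Submodule.mem_orthogonal, inner_sub_left, sub_eq_zero] using hx
  -- `‖f x‖ ≤ ‖x‖` and `⟪f x, x⟫ = ‖x‖²`: equality in Cauchy–Schwarz.
  refine eq_of_norm_le_re_inner_eq_norm_sq (𝕜 := 𝕜) ?_ ?_
  · simpa using f.le_of_opNorm_le hf x
  · simp [hinner]

/-- The subspace of vectors fixed by every operator of the family `V`, onto which the mean ergodic
theorem projects. -/
def fixedVectors (V : G → H →L[𝕜] H) : Submodule 𝕜 H :=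
  ⨅ g, (V g).eqLocus (1 : H →L[𝕜] H)

theorem mem_fixedVectors : x ∈ fixedVectors V ↔ ∀ g, V g x = x := by
  simp [fixedVectors]

theorem isClosed_fixedVectors (V : G → H →L[𝕜] H) : IsClosed (fixedVectors V : Set H) := by
  have hinter : (fixedVectors V : Set H) = ⋂ g, {z | V g z = z} := by
    ext z
    simp [mem_fixedVectors]
  rw [hinter]
  exact isClosed_iInter fun g => isClosed_eq (V g).continuous continuous_id

variable [CompleteSpace H]

instance completeSpace_fixedVectors : CompleteSpace (fixedVectors V) :=
  (isClosed_fixedVectors V).completeSpace_coe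

theorem orthogonal_fixedVectors_le (hV : ∀ g, ‖V g‖ ≤ 1) :
    (fixedVectors V)ᗮ ≤ (⨆ g, (V g - 1).range).topologicalClosure := by
  rw [← Submodule.orthogonal_orthogonal_eq_closure, ← Submodule.iInf_orthogonal]
  exact Submodule.orthogonal_le
    (iInf_mono fun g => orthogonal_range_sub_one_le_eqLocus (hV g))

theorem tendsto_starProjection_fixedVectors (hV : ∀ g, ‖V g‖ ≤ 1) {l : Filter ι}
    {A : ι → H →L[𝕜] H} (hA : ∀ n, ‖A n‖ ≤ 1) (hfix : ∀ n, ∀ y ∈ fixedVectors V, A n y = y)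
    (hinv : ∀ g y, Tendsto (fun n => A n (V g y - y)) l (nhds 0)) (x : H) :
    Tendsto (fun n => A n x) l (nhds ((fixedVectors V).starProjection x)) := by
  set p := (fixedVectors V).starProjection x
  have hspan (y : H) (hy : y ∈ ⨆ g, (V g - 1).range) : Tendsto (fun n => A n y) l (nhds 0) := by
    induction hy using Submodule.iSup_induction' with
    | mem g y hy =>
      obtain ⟨z, rfl⟩ := hy
      exact hinv g z
    | zero => simpa using tendsto_const_nhds
    | add y z _ _ hy hz => simpa using hy.add hz
  have horth : Tendsto (fun n => A n (x - p)) l (nhds 0) :=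
    tendsto_zero_of_mem_topologicalClosure hA hspan
      (orthogonal_fixedVectors_le hV (Submodule.sub_starProjection_mem_orthogonal x))
  simpa [hfix _ p (Submodule.starProjection_apply_mem _ x)] using horth.add_const p

end MeanErgodic

section OrbitAverage

variable {G 𝕜 H : Type*} [RCLike 𝕜] [NormedAddCommGroup H] [InnerProductSpace 𝕜 H]
  {V : G → H →L[𝕜] H}

/-- The average of the operators `V n` over a finite set of indices `n`
(the zero operator if that set is empty). -/
def orbitAverage (V : G → H →L[𝕜] H) (A : Finset G) : H →L[𝕜] H :=
  (#A : 𝕜)⁻¹ • ∑ n ∈ A, V n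

theorem orbitAverage_apply (V : G → H →L[𝕜] H) (A : Finset G) (x : H) :
    orbitAverage V A x = (#A : 𝕜)⁻¹ • ∑ n ∈ A, V n x := by
  simp [orbitAverage]

theorem norm_orbitAverage_le_one (hV : ∀ g, ‖V g‖ ≤ 1) (A : Finset G) :
    ‖orbitAverage V A‖ ≤ 1 := by
  rw [orbitAverage, norm_smul, norm_inv, RCLike.norm_natCast]
  refine inv_mul_le_one_of_le₀ ?_ (Nat.cast_nonneg _)
  simpa using norm_sum_le_of_le A fun n _ => hV n

theorem orbitAverage_apply_of_mem_fixedVectors {A : Finset G} (hA : A.Nonempty) {x : H}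
    (hx : x ∈ fixedVectors V) : orbitAverage V A x = x := by
  have hcard : (#A : 𝕜) ≠ 0 := by exact_mod_cast hA.card_ne_zero
  rw [orbitAverage_apply, sum_congr rfl fun n _ => mem_fixedVectors.1 hx n, sum_const,
    ← Nat.cast_smul_eq_nsmul 𝕜, inv_smul_smul₀ hcard]

theorem norm_orbitAverage_apply_sub_le [AddCancelCommMonoid G] [DecidableEq G]
    (hV : ∀ g, ‖V g‖ ≤ 1) (hadd : ∀ g h, V (g + h) = (V g).comp (V h)) (A : Finset G) (g : G)
    (y : H) :
    ‖orbitAverage V A (V g y - y)‖ ≤ (#(A.image (g + ·) ∆ A) : ℝ) / #A * ‖y‖ := by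
  have hshift : ∑ n ∈ A, V n (V g y) = ∑ n ∈ A.image (g + ·), V n y := by
    rw [sum_image fun _ _ _ _ h => add_left_cancel h]
    exact sum_congr rfl fun n _ => by rw [add_comm, hadd]; rfl
  rw [orbitAverage_apply, norm_smul, norm_inv, RCLike.norm_natCast, div_mul_eq_mul_div,
    div_eq_inv_mul]
  simp only [map_sub, sum_sub_distrib, hshift]
  gcongr
  exact norm_sum_sub_sum_le_card_symmDiff_mul
    (fun n => by simpa using (V n).le_of_opNorm_le (hV n) y) _ _

theorem norm_inner_orbitAverage_sq_le (V : G → H →L[𝕜] H) (A : Finset G) (x : H) :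
    ‖inner 𝕜 (orbitAverage V A x) x‖ ^ 2 ≤ (#A : ℝ)⁻¹ * ∑ h ∈ A, ‖inner 𝕜 (V h x) x‖ ^ 2 := by
  rcases A.eq_empty_or_nonempty with rfl | hA
  · simp [orbitAverage]
  have hcard : (#A : ℝ) ≠ 0 := by exact_mod_cast hA.card_ne_zero
  rw [orbitAverage_apply, inner_smul_left, sum_inner, norm_mul, mul_pow, RCLike.norm_conj,
    norm_inv, RCLike.norm_natCast]
  calc (#A : ℝ)⁻¹ ^ 2 * ‖∑ h ∈ A, inner 𝕜 (V h x) x‖ ^ 2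
      ≤ (#A : ℝ)⁻¹ ^ 2 * (∑ h ∈ A, ‖inner 𝕜 (V h x) x‖) ^ 2 := by
        gcongr
        exact norm_sum_le _ _
    _ ≤ (#A : ℝ)⁻¹ ^ 2 * (#A * ∑ h ∈ A, ‖inner 𝕜 (V h x) x‖ ^ 2) := by
        gcongr
        exact sq_sum_le_card_mul_sum_sq
    _ = (#A : ℝ)⁻¹ * ∑ h ∈ A, ‖inner 𝕜 (V h x) x‖ ^ 2 := by field_simp

end OrbitAverage

section Folner

variable {L : ℕ} {𝕜 H : Type*} [RCLike 𝕜] [NormedAddCommGroup H] [InnerProductSpace 𝕜 H]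
  [CompleteSpace H] {V : (Fin L → ℤ) → H →L[𝕜] H} {I J : ℕ → Finset (Fin L → ℤ)}

theorem IsFolner.tendsto_orbitAverage (hI : IsFolner L I) (hV : ∀ g, ‖V g‖ ≤ 1)
    (hadd : ∀ g h, V (g + h) = (V g).comp (V h)) (x : H) :
    Tendsto (fun N => orbitAverage V (I N) x) atTop
      (nhds ((fixedVectors V).starProjection x)) := by
  refine tendsto_starProjection_fixedVectors hV (fun N => norm_orbitAverage_le_one hV (I N))
    (fun N _ => orbitAverage_apply_of_mem_fixedVectors (hI.1 N)) (fun g y => ?_) x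
  refine squeeze_zero_norm (fun N => norm_orbitAverage_apply_sub_le hV hadd (I N) g y) ?_
  simpa using (hI.2 g).mul_const ‖y‖

theorem limsup_norm_orbitAverage_pow_four_le (hV : ∀ g, ‖V g‖ ≤ 1)
    (hadd : ∀ g h, V (g + h) = (V g).comp (V h)) {x : H} {a : (Fin L → ℤ) → ℝ}
    (ha : ∀ h, ‖inner 𝕜 (V h x) x‖ ^ 2 ≤ a h) {C : ℝ} (haC : ∀ h, a h ≤ C)
    (hI : IsFolner L I) (hJ : IsFolner L J) :
    limsup (fun N => ‖orbitAverage V (I N) x‖ ^ 4) atTop ≤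
      limsup (fun N => (#(J N) : ℝ)⁻¹ * ∑ h ∈ J N, a h) atTop := by
  set p := (fixedVectors V).starProjection x
  have hcorr : Tendsto (fun N => ‖inner 𝕜 (orbitAverage V (J N) x) x‖ ^ 2) atTop
      (nhds (‖p‖ ^ 4)) := by
    have h := ((hJ.tendsto_orbitAverage hV hadd x).inner (𝕜 := 𝕜)
      (tendsto_const_nhds (x := x))).norm.pow 2
    rwa [norm_inner_starProjection_self, ← pow_mul] at h
  have hbdd (N : ℕ) : (#(J N) : ℝ)⁻¹ * ∑ h ∈ J N, a h ≤ C := by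
    rw [inv_mul_le_iff₀ (by exact_mod_cast (hJ.1 N).card_pos), ← nsmul_eq_mul]
    exact sum_le_card_nsmul _ _ _ fun h _ => haC h
  rw [((hI.tendsto_orbitAverage hV hadd x).norm.pow 4).limsup_eq, ← hcorr.limsup_eq]
  refine limsup_le_limsup (.of_forall fun N => ?_) hcorr.isCoboundedUnder_le
    ⟨C, eventually_map.2 <| .of_forall hbdd⟩
  calc ‖inner 𝕜 (orbitAverage V (J N) x) x‖ ^ 2
      ≤ (#(J N) : ℝ)⁻¹ * ∑ h ∈ J N, ‖inner 𝕜 (V h x) x‖ ^ 2 :=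
        norm_inner_orbitAverage_sq_le V (J N) x
    _ ≤ (#(J N) : ℝ)⁻¹ * ∑ h ∈ J N, a h := by
        gcongr with h
        exact ha h

end Folner

section Cube

theorem isFolner_of_tendsto_card_inter_div_card {L : ℕ} {I : ℕ → Finset (Fin L → ℤ)}
    (hI : ∀ N, (I N).Nonempty)
    (hinter : ∀ g, Tendsto (fun N => (#((I N).image (g + ·) ∩ I N) : ℝ) / #(I N)) atTop (nhds 1)) :
    IsFolner L I := by
  refine ⟨hI, fun g => ?_⟩
  have hlim := ((hinter g).const_sub 1).const_mul 2
  rw [sub_self, mul_zero] at hlim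
  refine hlim.congr fun N => ?_
  have hcard : (#(I N) : ℝ) ≠ 0 := by exact_mod_cast (hI N).card_ne_zero
  rw [card_symmDiff_eq_two_mul_card_sub_card_inter
    (card_image_of_injective _ (add_right_injective g))]
  field_simp

theorem Icc_inter_Icc_eq_Icc {α : Type*} [Lattice α] [LocallyFiniteOrder α] [DecidableEq α]
    (a b c d : α) : Icc a b ∩ Icc c d = Icc (a ⊔ c) (b ⊓ d) := by
  rw [← coe_inj, coe_inter, coe_Icc, coe_Icc, coe_Icc, Set.Icc_inter_Icc]

theorem card_image_add_Icc_inter_Icc (g : ℤ) (N : ℕ) :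
    #((Icc (-N : ℤ) N).image (g + ·) ∩ Icc (-N : ℤ) N) = (2 * N + 1 - |g|).toNat := by
  rw [image_add_left_Icc, Icc_inter_Icc_eq_Icc, Int.card_Icc]
  grind

theorem tendsto_card_image_add_Icc_inter_Icc_div (g : ℤ) :
    Tendsto (fun N : ℕ => (#((Icc (-N : ℤ) N).image (g + ·) ∩ Icc (-N : ℤ) N) : ℝ) / (2 * N + 1))
      atTop (nhds 1) := by
  have htop : Tendsto (fun N : ℕ => 2 * (N : ℝ) + 1) atTop atTop :=
    tendsto_atTop_add_const_right _ _ (tendsto_natCast_atTop_atTop.const_mul_atTop two_pos)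
  have hlim : Tendsto (fun N : ℕ => 1 - |(g : ℝ)| / (2 * N + 1)) atTop (nhds 1) := by
    simpa using (htop.const_div_atTop |(g : ℝ)|).const_sub 1
  refine hlim.congr' ?_
  filter_upwards [eventually_ge_atTop g.natAbs] with N hN
  have hcard : (#((Icc (-N : ℤ) N).image (g + ·) ∩ Icc (-N : ℤ) N) : ℤ) = 2 * N + 1 - |g| := by
    rw [card_image_add_Icc_inter_Icc, Int.toNat_of_nonneg (by grind)]
  have hcast : (#((Icc (-N : ℤ) N).image (g + ·) ∩ Icc (-N : ℤ) N) : ℝ) =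
      2 * N + 1 - |(g : ℝ)| := by
    exact_mod_cast hcard
  rw [hcast]
  field_simp

theorem card_Icc_pi_neg (L N : ℕ) :
    #(Icc (fun _ : Fin L => -(N : ℤ)) fun _ => N) = (2 * N + 1) ^ L := by
  rw [Pi.card_Icc]
  simp only [Int.card_Icc, prod_const, card_univ, Fintype.card_fin]
  congr 1
  lia

theorem card_image_add_Icc_pi_inter_Icc_pi (L N : ℕ) (g : Fin L → ℤ) :
    #((Icc (fun _ : Fin L => -(N : ℤ)) fun _ => N).image (g + ·) ∩
        Icc (fun _ => -(N : ℤ)) fun _ => N) =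
      ∏ j, #((Icc (-N : ℤ) N).image (g j + ·) ∩ Icc (-N : ℤ) N) := by
  simp only [image_add_left_Icc, Icc_inter_Icc_eq_Icc, Pi.card_Icc]
  rfl

theorem isFolner_Icc_pi (L : ℕ) :
    IsFolner L fun N => Icc (fun _ => -(N : ℤ)) fun _ => N := by
  refine isFolner_of_tendsto_card_inter_div_card
    (fun N => nonempty_Icc.2 fun _ => by simp) fun g => ?_
  have hprod := tendsto_finsetProd univ fun j _ => tendsto_card_image_add_Icc_inter_Icc_div (g j)
  rw [prod_const_one] at hprod
  refine hprod.congr fun N => ?_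
  rw [card_image_add_Icc_pi_inter_Icc_pi, card_Icc_pi_neg, prod_div_distrib]
  simp

end Cube

/-! ### Twisted Koopman operators -/

section Koopman

variable {Y : Type*} [MeasurableSpace Y] {ν : Measure Y}

/-- The Koopman operator of a measure-preserving map `R` twisted by the phase `c`, that is
`φ ↦ c · (φ ∘ R)` on `L²(ν)`; it turns a weighted ergodic average into an `orbitAverage`. -/
def twistedKoopman {R : Y → Y} (hR : MeasurePreserving R ν ν) (c : Circle) :
    Lp ℂ 2 ν →L[ℂ] Lp ℂ 2 ν :=
  (c : ℂ) • (Lp.compMeasurePreservingₗᵢ ℂ R hR).toContinuousLinearMap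

theorem twistedKoopman_apply {R : Y → Y} (hR : MeasurePreserving R ν ν) (c : Circle)
    (φ : Lp ℂ 2 ν) : twistedKoopman hR c φ = (c : ℂ) • Lp.compMeasurePreserving R hR φ := rfl

theorem norm_twistedKoopman_le_one {R : Y → Y} (hR : MeasurePreserving R ν ν) (c : Circle) :
    ‖twistedKoopman hR c‖ ≤ 1 := by
  rw [twistedKoopman, norm_smul, Circle.norm_coe, one_mul]
  exact LinearIsometry.norm_toContinuousLinearMap_le _

theorem twistedKoopman_comp {R R' : Y → Y} (hR : MeasurePreserving R ν ν)
    (hR' : MeasurePreserving R' ν ν) (c c' : Circle) :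
    (twistedKoopman hR' c').comp (twistedKoopman hR c) =
      twistedKoopman (hR.comp hR') (c * c') := by
  ext1 φ
  have hcomp : Lp.compMeasurePreserving (R ∘ R') (hR.comp hR') φ =
      Lp.compMeasurePreserving R' hR' (Lp.compMeasurePreserving R hR φ) :=
    Lp.compMeasurePreserving_comp_apply φ hR hR'
  rw [ContinuousLinearMap.comp_apply, twistedKoopman_apply hR, map_smul, twistedKoopman_apply,
    twistedKoopman_apply, hcomp, smul_smul, Circle.coe_mul]

theorem twistedKoopman_toLp {R : Y → Y} (hR : MeasurePreserving R ν ν) (c : Circle) {F : Y → ℂ}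
    (hF : MemLp F 2 ν) : twistedKoopman hR c (hF.toLp F) =
      ((hF.comp_measurePreserving hR).const_mul (c : ℂ)).toLp fun y => c * F (R y) := by
  rw [twistedKoopman_apply, Lp.toLp_compMeasurePreserving]
  rfl

theorem norm_inner_twistedKoopman {R : Y → Y} (hR : MeasurePreserving R ν ν) (c : Circle)
    {F : Y → ℂ} (hF : MemLp F 2 ν) :
    ‖inner ℂ (twistedKoopman hR c (hF.toLp F)) (hF.toLp F)‖ =
      ‖∫ y, F (R y) * (starRingEnd ℂ) (F y) ∂ν‖ := by
  rw [norm_inner_symm, twistedKoopman_apply, inner_smul_right, norm_mul, Circle.norm_coe, one_mul,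
    Lp.toLp_compMeasurePreserving, L2.inner_def]
  congr 1
  refine integral_congr_ae ?_
  filter_upwards [hF.coeFn_toLp, (hF.comp_measurePreserving hR).coeFn_toLp] with y hy hRy
  simp [hy, hRy, RCLike.inner_apply]

theorem sum_toLp {ι E : Type*} [NormedAddCommGroup E] {p : ℝ≥0∞} {F : ι → Y → E}
    (hF : ∀ n, MemLp (F n) p ν) (A : Finset ι) :
    ∑ n ∈ A, (hF n).toLp (F n) = (memLp_finsetSum A fun n _ => hF n).toLp
      fun y => ∑ n ∈ A, F n y := by
  classical
  induction A using Finset.induction_on with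
  | empty => simp only [sum_empty]; rfl
  | insert a s ha ih => simp only [sum_insert ha, ih]; rfl

variable {G : Type*} {R : G → Y → Y}

theorem norm_orbitAverage_twistedKoopman (hR : ∀ g, MeasurePreserving (R g) ν ν)
    (c : G → Circle) (A : Finset G) {F : Y → ℂ} (hF : MemLp F 2 ν) :
    ‖orbitAverage (fun g => twistedKoopman (hR g) (c g)) A (hF.toLp F)‖ =
      (eLpNorm (fun y => (#A : ℂ)⁻¹ * ∑ n ∈ A, c n * F (R n y)) 2 ν).toReal := by
  simp only [orbitAverage_apply, twistedKoopman_toLp, sum_toLp, ← MemLp.toLp_const_smul,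
    Lp.norm_toLp]
  rfl

end Koopman

/-! ### Conditional expectations and product measures -/

section CondExp

variable {X E : Type*} [NormedAddCommGroup E] [NormedSpace ℝ E]
  {m mX : MeasurableSpace X} {μ : Measure X} [IsProbabilityMeasure μ] {g : X → E}

theorem norm_integral_sq_le_integral_norm_sq (hg : MemLp g 2 μ) :
    ‖∫ x, g x ∂μ‖ ^ 2 ≤ ∫ x, ‖g x‖ ^ 2 ∂μ :=
  calc ‖∫ x, g x ∂μ‖ ^ 2
      ≤ (∫ x, ‖g x‖ ∂μ) ^ 2 := by
        gcongr
        exact norm_integral_le_integral_norm g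
    _ ≤ ∫ x, ‖g x‖ ^ 2 ∂μ :=
        (even_two.convexOn_pow (𝕜 := ℝ)).map_integral_le (continuousOn_pow 2) isClosed_univ
          (.of_forall fun _ => Set.mem_univ _) (hg.integrable one_le_two).norm
          hg.integrable_norm_pow'

variable [CompleteSpace E]

theorem norm_integral_sq_le_integral_norm_condExp_sq (hm : m ≤ mX) (hg : MemLp g 2 μ) :
    ‖∫ x, g x ∂μ‖ ^ 2 ≤ ∫ x, ‖μ[g | m] x‖ ^ 2 ∂μ := by
  rw [← integral_condExp hm]
  exact norm_integral_sq_le_integral_norm_sq (hg.condExp one_le_two)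

theorem integral_norm_condExp_sq_le {R : ℝ} (hg : ∀ᵐ x ∂μ, ‖g x‖ ≤ R) :
    ∫ x, ‖μ[g | m] x‖ ^ 2 ∂μ ≤ R ^ 2 := by
  have hbound : ∀ᵐ x ∂μ, ‖‖μ[g | m] x‖ ^ 2‖ ≤ R ^ 2 := by
    filter_upwards [ae_bdd_norm_condExp_of_ae_bdd_norm hg] with x hx
    rw [norm_pow, norm_norm]
    gcongr
  simpa using (le_abs_self _).trans (norm_integral_le_of_norm_le_const hbound)

end CondExp

section Correlation

variable {X 𝕜 : Type*} [RCLike 𝕜] {f : X → 𝕜} {T : X → X}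

theorem norm_comp_mul_conj_le_one (hfb : ∀ x, ‖f x‖ ≤ 1) (x : X) :
    ‖f (T x) * (starRingEnd 𝕜) (f x)‖ ≤ 1 := by
  rw [norm_mul, RCLike.norm_conj]
  exact mul_le_one₀ (hfb _) (norm_nonneg _) (hfb _)

theorem memLp_comp_mul_conj {_ : MeasurableSpace X} {μ : Measure X} [IsFiniteMeasure μ] {p : ℝ≥0∞}
    (hT : Measurable T) (hfm : Measurable f) (hfb : ∀ x, ‖f x‖ ≤ 1) :
    MemLp (fun x => f (T x) * (starRingEnd 𝕜) (f x)) p μ :=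
  .of_bound ((hfm.comp hT).mul (RCLike.continuous_conj.measurable.comp hfm)).aestronglyMeasurable 1
    (.of_forall (norm_comp_mul_conj_le_one hfb))

end Correlation

section Tensor

variable {ι 𝕜 : Type*} [RCLike 𝕜] [Fintype ι] {X : ι → Type*} [∀ i, MeasurableSpace (X i)]
  {μ : ∀ i, Measure (X i)} [∀ i, IsProbabilityMeasure (μ i)]

theorem norm_integral_pi_prod_le {g : ∀ i, X i → 𝕜}
    (hg : ∀ i, ∀ᵐ x ∂μ i, ‖g i x‖ ≤ 1) (i : ι) :
    ‖∫ x, ∏ i', g i' (x i') ∂Measure.pi μ‖ ≤ ‖∫ x, g i x ∂μ i‖ := by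
  classical
  rw [integral_fintype_prod_eq_prod, norm_prod, ← mul_prod_erase _ _ (mem_univ i)]
  refine mul_le_of_le_one_right (norm_nonneg _)
    (prod_le_one (fun _ _ => norm_nonneg _) fun j _ => ?_)
  simpa using norm_integral_le_of_norm_le_const (hg j)

theorem memLp_pi_prod {p : ℝ≥0∞} {f : ∀ i, X i → 𝕜} (hfm : ∀ i, Measurable (f i))
    (hfb : ∀ i x, ‖f i x‖ ≤ 1) : MemLp (fun x => ∏ i, f i (x i)) p (Measure.pi μ) := by
  have hmeas : Measurable fun x : ∀ i, X i => ∏ i, f i (x i) :=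
    Finset.measurable_fun_prod _ fun i _ => (hfm i).comp (measurable_pi_apply i)
  refine .of_bound hmeas.aestronglyMeasurable 1 (.of_forall fun x => ?_)
  rw [norm_prod]
  exact prod_le_one (fun _ _ => norm_nonneg _) fun i _ => hfb i _

theorem norm_integral_pi_prod_comp_mul_conj_sq_le {T : ∀ i, X i → X i}
    (hT : ∀ i, Measurable (T i)) {f : ∀ i, X i → 𝕜} (hfm : ∀ i, Measurable (f i))
    (hfb : ∀ i x, ‖f i x‖ ≤ 1) (i : ι) {m : MeasurableSpace (X i)}
    (hm : m ≤ ‹∀ i, MeasurableSpace (X i)› i) :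
    ‖∫ x, (∏ i', f i' (T i' (x i'))) * (starRingEnd 𝕜) (∏ i', f i' (x i')) ∂Measure.pi μ‖ ^ 2 ≤
      ∫ x, ‖((μ i)[fun y => f i (T i y) * (starRingEnd 𝕜) (f i y) | m]) x‖ ^ 2 ∂μ i := by
  simp only [map_prod, ← prod_mul_distrib]
  calc ‖∫ x, ∏ i', f i' (T i' (x i')) * (starRingEnd 𝕜) (f i' (x i')) ∂Measure.pi μ‖ ^ 2
      ≤ ‖∫ x, f i (T i x) * (starRingEnd 𝕜) (f i x) ∂μ i‖ ^ 2 := by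
        gcongr
        exact norm_integral_pi_prod_le
          (g := fun i' x => f i' (T i' x) * (starRingEnd 𝕜) (f i' x))
          (fun i' => .of_forall (norm_comp_mul_conj_le_one (hfb i'))) i
    _ ≤ _ := norm_integral_sq_le_integral_norm_condExp_sq hm
        (memLp_comp_mul_conj (hT i) (hfm i) (hfb i))

end Tensor

/-! ### Twisted averages -/

section TwistedAverage

-- If `u` is not bounded above, its `limsup` is the junk value `sInf ∅ = 0`.
theorem real_limsup_nonneg {ι : Type*} {l : Filter ι} [l.NeBot] {u : ι → ℝ} (hu : ∀ n, 0 ≤ u n) :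
    0 ≤ limsup u l := by
  rw [limsup_eq]
  refine Real.sInf_nonneg fun a ha => ?_
  obtain ⟨n, hn⟩ := ha.exists
  exact (hu n).trans hn

variable {L : ℕ} {I J : ℕ → Finset (Fin L → ℤ)} {a : (Fin L → ℤ) → ℝ} {C : ℝ}

theorem limsup_eLpNorm_twistedAverage_pow_four_le {Y : Type*} [MeasurableSpace Y] {ν : Measure Y}
    {R : (Fin L → ℤ) → Y → Y} (hR : ∀ g, MeasurePreserving (R g) ν ν)
    (hRadd : ∀ g h, R (g + h) = R g ∘ R h) (χ : AddChar (Fin L → ℤ) Circle) {F : Y → ℂ}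
    (hF : MemLp F 2 ν)
    (ha : ∀ h, ‖∫ y, F (R h y) * (starRingEnd ℂ) (F y) ∂ν‖ ^ 2 ≤ a h) (haC : ∀ h, a h ≤ C)
    (hI : IsFolner L I) (hJ : IsFolner L J) :
    limsup (fun N =>
        (eLpNorm (fun y => (#(I N) : ℂ)⁻¹ * ∑ n ∈ I N, χ n * F (R n y)) 2 ν).toReal ^ 4) atTop ≤
      limsup (fun N => (#(J N) : ℝ)⁻¹ * ∑ h ∈ J N, a h) atTop := by
  simp only [← norm_orbitAverage_twistedKoopman hR χ _ hF]
  refine limsup_norm_orbitAverage_pow_four_le (fun g => norm_twistedKoopman_le_one _ _)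
    (fun g h => ?_) (fun h => ?_) haC hI hJ
  · rw [twistedKoopman_comp]
    congr 1
    · rw [add_comm, hRadd]
    · rw [add_comm, χ.map_add_eq_mul, mul_comm]
  · rw [norm_inner_twistedKoopman]
    exact ha h

theorem limsup_eLpNorm_twistedAverage_pi_pow_four_le {ι : Type*} [Fintype ι] {X : ι → Type*}
    [∀ i, MeasurableSpace (X i)] {μ : ∀ i, Measure (X i)} [∀ i, IsProbabilityMeasure (μ i)]
    {S : ∀ i, (Fin L → ℤ) → X i → X i} (hSadd : ∀ i g h, S i (g + h) = S i g ∘ S i h)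
    (hSmp : ∀ i g, MeasurePreserving (S i g) (μ i) (μ i)) (χ : AddChar (Fin L → ℤ) Circle)
    {f : ∀ i, X i → ℂ} (hfm : ∀ i, Measurable (f i)) (hfb : ∀ i x, ‖f i x‖ ≤ 1) (i : ι)
    {m : MeasurableSpace (X i)} (hm : m ≤ ‹∀ i, MeasurableSpace (X i)› i)
    (hI : IsFolner L I) (hJ : IsFolner L J) :
    limsup (fun N => (eLpNorm (fun x =>
        (#(I N) : ℂ)⁻¹ * ∑ n ∈ I N, χ n * ∏ i', f i' (S i' n (x i')))
        2 (Measure.pi μ)).toReal ^ 4) atTop ≤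
      limsup (fun N => (#(J N) : ℝ)⁻¹ * ∑ h ∈ J N,
        ∫ x, ‖((μ i)[fun y => f i (S i h y) * (starRingEnd ℂ) (f i y) | m]) x‖ ^ 2 ∂μ i)
        atTop := by
  have hR (g : Fin L → ℤ) : MeasurePreserving (fun x i' => S i' g (x i'))
      (Measure.pi μ) (Measure.pi μ) := measurePreserving_pi _ _ fun i' => hSmp i' g
  have hRadd (g h : Fin L → ℤ) : (fun x i' => S i' (g + h) (x i')) =
      (fun x i' => S i' g (x i')) ∘ fun x : ∀ i', X i' => fun i' => S i' h (x i') :=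
    funext₂ fun x i' => congrFun (hSadd i' g h) (x i')
  have hcorr (h : Fin L → ℤ) := norm_integral_pi_prod_comp_mul_conj_sq_le (μ := μ)
    (fun i' => (hSmp i' h).measurable) hfm hfb i hm
  have hbound (h : Fin L → ℤ) := integral_norm_condExp_sq_le (μ := μ i) (m := m)
    (.of_forall (norm_comp_mul_conj_le_one (T := S i h) (hfb i)))
  exact limsup_eLpNorm_twistedAverage_pow_four_le (F := fun x => ∏ i', f i' (x i')) hR hRadd χ
    (memLp_pi_prod hfm hfb) hcorr hbound hI hJ

/-- The character `n ↦ e^{2πi α·n}` of `ℤ^L`: the weight `e^{2πi P(n)}` without its constant factor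
`e^{2πi β}`. -/
def linearPhase (α : Fin L → ℝ) : AddChar (Fin L → ℤ) Circle where
  toFun n := Real.fourierChar (∑ j, α j * n j)
  map_zero_eq_one' := by simp
  map_add_eq_mul' m n := by simp [mul_add, sum_add_distrib, AddChar.map_add_eq_mul]

theorem e2pi_eq_fourierChar (x : ℝ) : e2pi x = Real.fourierChar x := by
  rw [e2pi, Real.fourierChar_apply]
  congr 1
  push_cast
  ring

theorem e2pi_add (x y : ℝ) : e2pi (x + y) = e2pi x * e2pi y := by
  simp only [e2pi_eq_fourierChar, AddChar.map_add_eq_mul, Circle.coe_mul]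

theorem norm_e2pi (x : ℝ) : ‖e2pi x‖ = 1 := by
  rw [e2pi_eq_fourierChar, Circle.norm_coe]

theorem coe_linearPhase (α : Fin L → ℝ) (n : Fin L → ℤ) :
    (linearPhase α n : ℂ) = e2pi (∑ j, α j * n j) :=
  (e2pi_eq_fourierChar _).symm

theorem eLpNorm_affineAverage_eq {Y : Type*} [MeasurableSpace Y] {ν : Measure Y} {p : ℝ≥0∞}
    (α : Fin L → ℝ) (β : ℝ) (A : Finset (Fin L → ℤ)) (c : ℂ) (F : (Fin L → ℤ) → Y → ℂ) :
    eLpNorm (fun y => c * ∑ n ∈ A, e2pi ((∑ j, α j * n j) + β) * F n y) p ν =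
      eLpNorm (fun y => c * ∑ n ∈ A, linearPhase α n * F n y) p ν := by
  refine eLpNorm_congr_norm_ae (.of_forall fun y => ?_)
  simp only [coe_linearPhase, e2pi_add, mul_right_comm _ (e2pi β), ← sum_mul, norm_mul, norm_e2pi,
    mul_one]

end TwistedAverage

theorem invSigma_le {ι X : Type*} [mX : MeasurableSpace X] (T : ι → X → X) : invSigma T ≤ mX :=
  fun _ hA => hA.1

theorem stmt6_general {ι : Type*} [Fintype ι] {X : ι → Type*} [∀ i, MeasurableSpace (X i)]
    (μ : ∀ i, Measure (X i)) [∀ i, IsProbabilityMeasure (μ i)] {L : ℕ}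
    {S : ∀ i, (Fin L → ℤ) → X i → X i} (hSadd : ∀ i g h, S i (g + h) = S i g ∘ S i h)
    (hSmp : ∀ i g, MeasurePreserving (S i g) (μ i) (μ i)) (α : Fin L → ℝ) (β : ℝ)
    {f : ∀ i, X i → ℂ} (hfm : ∀ i, Measurable (f i)) (hfb : ∀ i x, ‖f i x‖ ≤ 1) (i : ι)
    {m : MeasurableSpace (X i)} (hm : m ≤ ‹∀ i, MeasurableSpace (X i)› i) :
    folnerSup L (fun I =>
        limsup (fun N =>
            (eLpNorm (fun x : ∀ i', X i' =>
                (#(I N) : ℂ)⁻¹ * ∑ n ∈ I N,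
                  e2pi ((∑ j, α j * n j) + β) * ∏ i', f i' (S i' n (x i')))
              2 (Measure.pi μ)).toReal ^ 4)
          atTop)
      ≤ limsup (fun N : ℕ =>
          ((2 * (N : ℝ) + 1) ^ L)⁻¹ * ∑ h ∈ Icc (fun _ => -(N : ℤ)) fun _ => N,
            ∫ x, ‖((μ i)[fun y => f i (S i h y) * (starRingEnd ℂ) (f i y) | m]) x‖ ^ 2 ∂μ i)
          atTop := by
  have hcard (N : ℕ) :
      (2 * (N : ℝ) + 1) ^ L = #(Icc (fun _ : Fin L => -(N : ℤ)) fun _ => N) := by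
    rw [card_Icc_pi_neg]
    push_cast
    rfl
  simp only [hcard, eLpNorm_affineAverage_eq]
  refine Real.sSup_le ?_ (real_limsup_nonneg fun N => by positivity)
  rintro _ ⟨I, hI, rfl⟩
  exact limsup_eLpNorm_twistedAverage_pi_pow_four_le hSadd hSmp (linearPhase α) hfm hfb i hm hI
    (isFolner_Icc_pi L)

/-- **Lemma.** Bound of a twisted linear average on a product system by the Host–Kra type
quantity of the `i`-th function. The commuting families `T_{i,j}` and their integer
powers are encoded by the commuting `ℤ^L`-actions `S i`, so that `T_i^h = S i h` and
`T_{i,j} = S i (Pi.single j 1)`. -/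
theorem stmt6 {X : Type*} [MeasurableSpace X] (μ : Measure X) [IsProbabilityMeasure μ]
    (k L : ℕ) (hk : 0 < k) (hL : 0 < L)
    (S : Fin k → (Fin L → ℤ) → X → X)
    (hS0 : ∀ i, S i 0 = id)
    (hSadd : ∀ i g h, S i (g + h) = S i g ∘ S i h)
    (hSmp : ∀ i g, MeasurePreserving (S i g) μ μ)
    (hcomm : ∀ i i' g g', S i g ∘ S i' g' = S i' g' ∘ S i g)
    (α : Fin L → ℝ) (β : ℝ)
    (f : Fin k → X → ℂ) (hfm : ∀ i, Measurable (f i)) (hfb : ∀ i x, ‖f i x‖ ≤ 1)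
    (i : Fin k) :
    folnerSup L (fun I =>
        limsup (fun N =>
            (eLpNorm (fun x : Fin k → X =>
                (((I N).card : ℂ))⁻¹ * ∑ n ∈ I N,
                  e2pi ((∑ j, α j * (n j : ℝ)) + β) * ∏ i', f i' (S i' n (x i')))
              2 (Measure.pi fun _ : Fin k => μ)).toReal ^ 4)
          atTop)
      ≤ 16 * limsup (fun N : ℕ =>
          (((2 * (N : ℝ) + 1) ^ L))⁻¹ *
            ∑ h ∈ Finset.Icc (fun _ => -(N : ℤ)) (fun _ => (N : ℤ)),
              ∫ x, ‖(μ[(fun y => f i (S i h y) * (starRingEnd ℂ) (f i y)) |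
                invSigma (fun j : Fin L => S i (Pi.single j 1))]) x‖ ^ 2 ∂μ)
          atTop :=
  (stmt6_general (fun _ => μ) hSadd hSmp α β hfm hfb i (invSigma_le _)).trans
    (le_mul_of_one_le_left (real_limsup_nonneg fun N => by positivity) (by norm_num))
end
end
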